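/- arXiv:2211.14374 — 6 statements merged into one kernel-verified Lean document; each statement's English description precedes it below -/
import Mathlib

section
/- Let u and w be normalized weights with u convex, and assume that u or w is of moderate growth. Then the following are equivalent: (i) there exist c ≥ 1 and C ≥ 1 with w(c·t) ≤ C·u(t) for all t ≥ 0; (ii) ⋃_{n∈ℕ, n≥1} H^∞_{u_n}(ℂ) ⊆ ⋃_{n∈ℕ, n≥1} H^∞_{w_n}(ℂ), where u_c(t) := u(c·t); (iii) ⋂_{c>0} H^∞_{u_c}(ℂ) ⊆ ⋂_{c>0} H^∞_{w_c}(ℂ). -/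
open Filter Set

/-- The associated weight function `ω_M(t) = sup_j log(t^j / M_j)` for `t ≠ 0`, `ω_M(0) = 0`. -/
noncomputable def omegaM (M : ℕ → ℝ) (t : ℝ) : ℝ :=
  if t = 0 then 0 else ⨆ j : ℕ, Real.log (t ^ j / M j)

/-- `v_M(t) = exp(-ω_M(t))`. -/
noncomputable def vM (M : ℕ → ℝ) (t : ℝ) : ℝ :=
  Real.exp (-(omegaM M t))

/-- `v_{M,c}(t) = exp(-ω_M(c·t))`. -/
noncomputable def vMc (M : ℕ → ℝ) (c t : ℝ) : ℝ :=
  Real.exp (-(omegaM M (c * t)))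

/-- `v_M^c(t) = exp(-c·ω_M(t))`. -/
noncomputable def vMpow (M : ℕ → ℝ) (c t : ℝ) : ℝ :=
  Real.exp (-(c * omegaM M t))

/-- A weight sequence: positive, `M_0 = 1`, `(M_j)^{1/j} → ∞`. -/
def WeightSeq (M : ℕ → ℝ) : Prop :=
  (∀ j, 0 < M j) ∧ M 0 = 1 ∧
    Tendsto (fun j : ℕ => (M j) ^ (1 / (j : ℝ))) atTop atTop

/-- Log-convexity: `M_j² ≤ M_{j-1}·M_{j+1}` for `j ≥ 1`. -/
def LogConvexSeq (M : ℕ → ℝ) : Prop :=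
  ∀ j : ℕ, 1 ≤ j → (M j) ^ 2 ≤ M (j - 1) * M (j + 1)

/-- The class `LC`: normalized log-convex weight sequences. -/
def LCset (M : ℕ → ℝ) : Prop :=
  WeightSeq M ∧ LogConvexSeq M ∧ 1 ≤ M 1

/-- Weighted space of entire functions with `sup |f(z)|·v(|z|) < ∞`. -/
def Hinf (v : ℝ → ℝ) : Set (ℂ → ℂ) :=
  {f | Differentiable ℂ f ∧
    ∃ C : ℝ, ∀ z : ℂ, ‖f z‖ * v ‖z‖ ≤ C}

/-- The weighted sup-norm `‖f‖_v`. -/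
noncomputable def wnorm (v : ℝ → ℝ) (f : ℂ → ℂ) : ℝ :=
  ⨆ z : ℂ, ‖f z‖ * v ‖z‖

/-- A weight: strictly positive, continuous, non-increasing and rapidly
decreasing on `[0,∞)`. -/
def IsWeight (v : ℝ → ℝ) : Prop :=
  (∀ t : ℝ, 0 ≤ t → 0 < v t) ∧ ContinuousOn v (Set.Ici 0) ∧
    AntitoneOn v (Set.Ici 0) ∧
    ∀ k : ℕ, Tendsto (fun t : ℝ => t ^ k * v t) atTop (nhds 0)

/-- A normalized weight: `v ≡ 1` on `[0,1]`. -/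
def NormalizedWeight (v : ℝ → ℝ) : Prop :=
  ∀ t : ℝ, 0 ≤ t → t ≤ 1 → v t = 1

/-- A (log-)convex weight: `t ↦ -log v(eᵗ)` is convex on `ℝ`. -/
def ConvexWeight (v : ℝ → ℝ) : Prop :=
  ConvexOn ℝ Set.univ fun t : ℝ => -Real.log (v (Real.exp t))

/-- Moderate growth for a weight: `v(H·t) ≤ e^H · v(t)²`. -/
def ModerateGrowthW (v : ℝ → ℝ) : Prop :=
  ∃ H : ℝ, 1 ≤ H ∧ ∀ t : ℝ, 0 ≤ t → v (H * t) ≤ Real.exp H * (v t) ^ 2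

/-- Moderate growth (mg) for a sequence: `M_{j+k} ≤ C^{j+k}·M_j·M_k`. -/
def MGseq (M : ℕ → ℝ) : Prop :=
  ∃ C : ℝ, 1 ≤ C ∧ ∀ j k : ℕ, M (j + k) ≤ C ^ (j + k) * M j * M k

/-- The associated weight sequence `M^v_j = sup_{t>0} t^j·v(t)`. -/
noncomputable def assocSeq (v : ℝ → ℝ) (j : ℕ) : ℝ :=
  ⨆ t : Set.Ioi (0 : ℝ), (t : ℝ) ^ j * v t

/-- The unit ball `B_{1/v}(ℂ)` of entire functions bounded by `1/v`. -/
def BClass (v : ℝ → ℝ) : Set (ℂ → ℂ) :=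
  {f | Differentiable ℂ f ∧ ∀ z : ℂ, ‖f z‖ ≤ 1 / v ‖z‖}

/-- The associated growth condition `w̃_v(z) = sup{|f(z)| : f ∈ B_{1/v}}`. -/
noncomputable def wTilde (v : ℝ → ℝ) (z : ℂ) : ℝ :=
  sSup {x : ℝ | ∃ f ∈ BClass v, x = ‖f z‖}

/-- The associated weight `ṽ = 1/w̃_v`, as a function of `t = |z|`. -/
noncomputable def vTilde (v : ℝ → ℝ) (t : ℝ) : ℝ :=
  1 / wTilde v (t : ℂ)

/-- An essential weight: `v ∼ ṽ`. -/
def Essential (v : ℝ → ℝ) : Prop :=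
  ∃ C : ℝ, 1 ≤ C ∧ ∀ t : ℝ, 0 ≤ t →
    v t ≤ C * vTilde v t ∧ vTilde v t ≤ C * v t

/-- `P_v(t) = sup_j t^j/‖z^j‖_v`. -/
noncomputable def Pfun (v : ℝ → ℝ) (t : ℝ) : ℝ :=
  ⨆ j : ℕ, t ^ j / wnorm v fun z : ℂ => z ^ j

/-- The convolved sequence `(M⋆N)_j = min_{0≤k≤j} M_k·N_{j-k}`. -/
noncomputable def convSeq (M N : ℕ → ℝ) (j : ℕ) : ℝ :=
  (Finset.range (j + 1)).inf' Finset.nonempty_range_add_one fun k => M k * N (j - k)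

lemma aux_bdd {v : ℝ → ℝ} (hv : IsWeight v) (j : ℕ) :
    ∃ K : ℝ, 0 ≤ K ∧ ∀ t : ℝ, 0 ≤ t → t ^ j * v t ≤ K := by
  obtain ⟨hpos, -, hanti, hlim⟩ := hv
  have h1 := (hlim j).eventually (eventually_le_nhds (show (0 : ℝ) < 1 by norm_num))
  obtain ⟨T, hT⟩ := eventually_atTop.1 h1
  have h0 := hpos 0 le_rfl
  refine ⟨1 + |T| ^ j * v 0, by positivity, fun t ht => ?_⟩
  by_cases htT : T ≤ t
  · have := hT t htT
    have : 0 ≤ |T| ^ j * v 0 := by positivity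
    linarith
  · push Not at htT
    have h2 : v t ≤ v 0 := hanti (by simp) (by simpa using ht) ht
    have h3 : t ≤ |T| := htT.le.trans (le_abs_self T)
    have h4 : t ^ j * v t ≤ |T| ^ j * v 0 :=
      mul_le_mul (pow_le_pow_left₀ ht h3 j) h2 (hpos t ht).le (by positivity)
    linarith

lemma aux_M {v : ℝ → ℝ} (hv : IsWeight v) (hvn : NormalizedWeight v) (j : ℕ) :
    ∃ M : ℝ, 1 ≤ M ∧ (∀ t : ℝ, 0 ≤ t → t ^ j * v t ≤ M) ∧
      ∀ K : ℝ, (∀ t : ℝ, 0 ≤ t → t ^ j * v t ≤ K) → M ≤ K := by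
  obtain ⟨K, -, hK⟩ := aux_bdd hv j
  have hb : BddAbove ((fun t : ℝ => t ^ j * v t) '' Ici 0) := by
    refine ⟨K, ?_⟩
    rintro _ ⟨t, ht, rfl⟩
    exact hK t ht
  have hle : ∀ t : ℝ, 0 ≤ t → t ^ j * v t ≤ sSup ((fun t : ℝ => t ^ j * v t) '' Ici 0) :=
    fun t ht => le_csSup hb ⟨t, ht, rfl⟩
  refine ⟨_, ?_, hle, ?_⟩
  · have := hle 1 zero_le_one
    rw [hvn 1 zero_le_one le_rfl] at this
    simpa using this
  · intro K' hK'
    refine csSup_le ⟨_, 0, by simp, rfl⟩ ?_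
    rintro _ ⟨t, ht, rfl⟩
    exact hK' t ht

lemma aux_subgrad {g : ℝ → ℝ} (hg : ConvexOn ℝ univ g) (x : ℝ) :
    ∃ l : ℝ, ∀ y, g x + l * (y - x) ≤ g y := by
  have hx : x ∈ interior (univ : Set ℝ) := by simp
  refine ⟨derivWithin g (Ioi x) x, fun y => ?_⟩
  rcases lt_trichotomy x y with h | h | h
  · have := hg.rightDeriv_le_slope_of_mem_interior hx (mem_univ y) h
    rw [slope_def_field, le_div_iff₀ (by linarith)] at this
    linarith
  · subst h; simp
  · have := (hg.slope_le_leftDeriv_of_mem_interior (mem_univ y) hx h).trans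
      (hg.leftDeriv_le_rightDeriv_of_mem_interior hx)
    rw [slope_def_field, div_le_iff₀ (by linarith)] at this
    linarith

lemma aux_convex {u : ℝ → ℝ} (hu : IsWeight u) (hun : NormalizedWeight u)
    (huc : ConvexWeight u) (t : ℝ) (ht : 1 ≤ t) :
    ∃ j : ℕ, ∀ s : ℝ, 0 ≤ s → s ^ j * u s ≤ t ^ (j + 1) * u t := by
  obtain ⟨hpos, -, hanti, -⟩ := hu
  obtain ⟨l, hl⟩ := aux_subgrad huc (Real.log t)
  have ht0 : 0 < t := by linarith
  have hx0 : 0 ≤ Real.log t := Real.log_nonneg ht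
  simp only [Real.exp_log ht0] at hl
  have hl0 : 0 ≤ l := by
    have h1 := hl (Real.log t - 1)
    have h2 : Real.exp (Real.log t - 1) ≤ t := by
      calc _ ≤ Real.exp (Real.log t) := Real.exp_le_exp.2 (by linarith)
        _ = t := Real.exp_log ht0
    have h3 : u t ≤ u (Real.exp (Real.log t - 1)) :=
      hanti (Real.exp_pos _).le ht0.le h2
    have h4 := Real.log_le_log (hpos t ht0.le) h3
    nlinarith
  have hj1 := Nat.floor_le hl0
  have hj2 := (Nat.lt_floor_add_one l).le
  refine ⟨⌊l⌋₊, ?_⟩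
  set j := ⌊l⌋₊
  have key : ∀ s : ℝ, 1 ≤ s → s ^ j * u s ≤ t ^ (j + 1) * u t := by
    intro s hs
    have hs0 : 0 < s := by linarith
    have hy0 : 0 ≤ Real.log s := Real.log_nonneg hs
    have h1 := hl (Real.log s)
    rw [Real.exp_log hs0] at h1
    have hus := hpos s hs0.le
    have hut := hpos t ht0.le
    rw [← Real.log_le_log_iff (by positivity) (by positivity),
      Real.log_mul (by positivity) hus.ne', Real.log_mul (by positivity) hut.ne',
      Real.log_pow, Real.log_pow]
    push_cast
    nlinarith [mul_le_mul_of_nonneg_right hj1 hy0, mul_le_mul_of_nonneg_right hj2 hx0]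
  intro s hs
  by_cases h : 1 ≤ s
  · exact key s h
  · push Not at h
    refine le_trans ?_ (key 1 le_rfl)
    rw [hun s hs h.le, hun 1 zero_le_one le_rfl]
    simpa using pow_le_one₀ hs h.le

lemma aux_main {u w : ℝ → ℝ} (hu : IsWeight u) (hun : NormalizedWeight u)
    (huc : ConvexWeight u) (hw : IsWeight w) (hwn : NormalizedWeight w)
    (hmg : ModerateGrowthW u ∨ ModerateGrowthW w) {M : ℕ → ℝ}
    (hM : ∀ j K, (∀ t : ℝ, 0 ≤ t → t ^ j * u t ≤ K) → M j ≤ K)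
    {A B : ℝ} (hA : 0 ≤ A) (hB : 1 ≤ B)
    (h : ∀ (j : ℕ) (t : ℝ), 0 ≤ t → t ^ j * w t ≤ A * B ^ j * M j) :
    ∃ c : ℝ, 1 ≤ c ∧ ∃ C : ℝ, 1 ≤ C ∧
        ∀ t : ℝ, 0 ≤ t → w (c * t) ≤ C * u t := by
  have hB0 : 0 < B := by linarith
  have key : ∀ t : ℝ, 1 ≤ t → w (B * t) ≤ A * t * u t := by
    intro t ht
    have ht0 : 0 < t := by linarith
    obtain ⟨j, hj⟩ := aux_convex hu hun huc t ht
    have h1 := hM j _ hj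
    have h2 := h j (B * t) (by positivity)
    have h3 : (B * t) ^ j * w (B * t) ≤ (B * t) ^ j * (A * t * u t) := by
      calc _ ≤ A * B ^ j * M j := h2
        _ ≤ A * B ^ j * (t ^ (j + 1) * u t) := by gcongr
        _ = _ := by ring
    exact le_of_mul_le_mul_left h3 (by positivity)
  have fin : ∀ c D : ℝ, 1 ≤ c → 0 ≤ D → (∀ t : ℝ, 1 ≤ t → w (c * t) ≤ D * u t) →
      ∃ c : ℝ, 1 ≤ c ∧ ∃ C : ℝ, 1 ≤ C ∧ ∀ t : ℝ, 0 ≤ t → w (c * t) ≤ C * u t := by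
    intro c D hc hD hh
    refine ⟨c, hc, 1 + D, by linarith, fun t ht => ?_⟩
    have hut := hu.1 t ht
    by_cases h1 : 1 ≤ t
    · have := hh t h1
      nlinarith
    · push Not at h1
      have h2 : w (c * t) ≤ w 0 := hw.2.2.1 (by simp) (show (0 : ℝ) ≤ c * t by positivity)
        (by positivity)
      rw [hwn 0 le_rfl zero_le_one] at h2
      rw [hun t ht h1.le]
      linarith
  rcases hmg with ⟨H, hH, hmg⟩ | ⟨H, hH, hmg⟩
  · obtain ⟨K, hK0, hK⟩ := aux_bdd hu 1
    refine fin (B * H) (A * H * Real.exp H * K) (by nlinarith) (by positivity) fun t ht => ?_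
    have ht0 : 0 < t := by linarith
    have hut := hu.1 t ht0.le
    have h1 := key (H * t) (by nlinarith)
    have h2 := hmg t ht0.le
    have h3 := hK t ht0.le
    rw [mul_assoc B]
    calc _ ≤ A * (H * t) * u (H * t) := h1
      _ ≤ A * (H * t) * (Real.exp H * (u t) ^ 2) := by gcongr
      _ = A * H * Real.exp H * (t ^ 1 * u t) * u t := by ring
      _ ≤ _ := by gcongr
  · obtain ⟨K, hK0, hK⟩ := aux_bdd hw 1
    refine fin (B * H) (Real.exp H * A * K) (by nlinarith) (by positivity) fun t ht => ?_
    have ht0 : 0 < t := by linarith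
    have hut := hu.1 t ht0.le
    have hBt : 0 ≤ B * t := by positivity
    have hwt := hw.1 (B * t) hBt
    have h1 := key t ht
    have h2 := hmg (B * t) hBt
    have h3 := hK (B * t) hBt
    have h4 : t * w (B * t) ≤ K := by
      refine le_trans ?_ h3
      rw [pow_one]
      gcongr
      nlinarith
    rw [show B * H * t = H * (B * t) by ring]
    calc _ ≤ Real.exp H * (w (B * t)) ^ 2 := h2
      _ = Real.exp H * (w (B * t) * w (B * t)) := by ring
      _ ≤ Real.exp H * (A * t * u t * w (B * t)) := by gcongr
      _ = Real.exp H * A * (t * w (B * t)) * u t := by ring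
      _ ≤ _ := by gcongr

lemma aux_entire (b : ℕ → ℝ) (p : ℕ → ℕ) (hb : ∀ k, 0 ≤ b k)
    (hD : ∀ R : ℝ, 0 ≤ R → ∃ D : ℝ, ∀ k, b k * R ^ p k ≤ D * (1 / 2) ^ k) :
    ∃ f : ℂ → ℂ, Differentiable ℂ f ∧
      (∀ (z : ℂ) (D : ℝ), (∀ k, b k * ‖z‖ ^ p k ≤ D * (1 / 2) ^ k) → ‖f z‖ ≤ D * 2) ∧
      ∀ (k : ℕ) (t : ℝ), 0 ≤ t → b k * t ^ p k ≤ ‖f t‖ := by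
  have hgeo : ∀ D : ℝ, HasSum (fun k : ℕ => D * (1 / 2 : ℝ) ^ k) (D * 2) :=
    fun D => hasSum_geometric_two.mul_left D
  have hnorm : ∀ (z : ℂ) k, ‖(b k : ℂ) * z ^ p k‖ = b k * ‖z‖ ^ p k := by
    intro z k
    rw [norm_mul, norm_pow, Complex.norm_real, Real.norm_of_nonneg (hb k)]
  refine ⟨fun z => ∑' k, (b k : ℂ) * z ^ p k, ?_, ?_, ?_⟩
  · intro z
    have hR : (0 : ℝ) ≤ ‖z‖ + 1 := by positivity
    obtain ⟨D, hD⟩ := hD _ hR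
    have := Complex.differentiableOn_tsum_of_summable_norm (U := Metric.ball (0 : ℂ) (‖z‖ + 1))
      (F := fun k z => (b k : ℂ) * z ^ p k) (hgeo D).summable
      (fun k => by fun_prop) Metric.isOpen_ball (fun k x hx => by
        rw [hnorm]
        refine le_trans ?_ (hD k)
        have : ‖x‖ ≤ ‖z‖ + 1 := by simpa using (mem_ball_zero_iff.1 hx).le
        have := hb k
        gcongr)
    exact this.differentiableAt (Metric.isOpen_ball.mem_nhds (by simp))
  · intro z D hz
    exact tsum_of_norm_bounded (hgeo D) (fun k => by rw [hnorm]; exact hz k)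
  · intro k t ht
    obtain ⟨D, hD⟩ := hD t ht
    have hn : ∀ k, 0 ≤ b k * t ^ p k := fun k => mul_nonneg (hb k) (by positivity)
    have hs : Summable fun k => b k * t ^ p k :=
      Summable.of_nonneg_of_le hn hD (hgeo D).summable
    have h1 : (∑' k, (b k : ℂ) * (t : ℂ) ^ p k) = ((∑' k, b k * t ^ p k : ℝ) : ℂ) := by
      rw [Complex.ofReal_tsum]
      simp
    show _ ≤ ‖∑' k, (b k : ℂ) * (t : ℂ) ^ p k‖
    rw [h1, Complex.norm_real, Real.norm_of_nonneg (tsum_nonneg hn)]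
    exact hs.le_tsum k (fun i _ => hn i)

lemma aux_fwd {u w : ℝ → ℝ} {a c C : ℝ} (ha : 0 ≤ a) (hC : 1 ≤ C)
    (h : ∀ t : ℝ, 0 ≤ t → w (c * t) ≤ C * u t) {d : ℝ}
    (hle : ∀ t : ℝ, 0 ≤ t → w (d * t) ≤ w (c * (a * t))) {f : ℂ → ℂ}
    (hf : f ∈ Hinf fun t : ℝ => u (a * t)) : f ∈ Hinf fun t : ℝ => w (d * t) := by
  obtain ⟨hd, K, hK⟩ := hf
  refine ⟨hd, C * K, fun z => ?_⟩
  have hz := norm_nonneg z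
  calc ‖f z‖ * w (d * ‖z‖) ≤ ‖f z‖ * (C * u (a * ‖z‖)) := by
        gcongr
        exact (hle _ hz).trans (h _ (by positivity))
    _ = C * (‖f z‖ * u (a * ‖z‖)) := by ring
    _ ≤ C * K := by gcongr; exact hK z

theorem stmt13 (u w : ℝ → ℝ) (hu : IsWeight u) (hun : NormalizedWeight u)
    (huc : ConvexWeight u) (hw : IsWeight w) (hwn : NormalizedWeight w)
    (hmg : ModerateGrowthW u ∨ ModerateGrowthW w) :
    ((∃ c : ℝ, 1 ≤ c ∧ ∃ C : ℝ, 1 ≤ C ∧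
        ∀ t : ℝ, 0 ≤ t → w (c * t) ≤ C * u t) ↔
      (⋃ n : {n : ℕ // 1 ≤ n}, Hinf fun t : ℝ => u ((n.1 : ℝ) * t)) ⊆
        ⋃ n : {n : ℕ // 1 ≤ n}, Hinf fun t : ℝ => w ((n.1 : ℝ) * t)) ∧
    ((∃ c : ℝ, 1 ≤ c ∧ ∃ C : ℝ, 1 ≤ C ∧
        ∀ t : ℝ, 0 ≤ t → w (c * t) ≤ C * u t) ↔
      (⋂ c : {c : ℝ // 0 < c}, Hinf fun t : ℝ => u (c.1 * t)) ⊆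
        ⋂ c : {c : ℝ // 0 < c}, Hinf fun t : ℝ => w (c.1 * t)) := by
  choose M hM1 hMle hMleast using aux_M hu hun
  have hM0 : ∀ j, 0 < M j := fun j => by linarith [hM1 j]
  refine ⟨⟨?_, ?_⟩, ⟨?_, ?_⟩⟩
  · rintro ⟨c, hc, C, hC, h⟩ f hf
    obtain ⟨⟨n, hn⟩, hf⟩ := mem_iUnion.1 hf
    have hn' : (1 : ℝ) ≤ n := by exact_mod_cast hn
    have hcn : c * n ≤ (⌈c * n⌉₊ : ℝ) := Nat.le_ceil _
    refine mem_iUnion.2 ⟨⟨⌈c * n⌉₊, ?_⟩, ?_⟩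
    · exact Nat.one_le_ceil_iff.2 (by nlinarith)
    · refine aux_fwd (by linarith) hC h (fun t ht => ?_) hf
      refine hw.2.2.1 (show (0 : ℝ) ≤ _ by positivity) (show (0 : ℝ) ≤ _ by positivity) ?_
      show c * (n * t) ≤ _
      rw [← mul_assoc]
      gcongr
  · intro hsub
    obtain ⟨f, hfd, hfu, hfl⟩ := aux_entire (fun k => (1 / 2) ^ k / M k) id
      (fun k => by have := hM0 k; positivity) (fun R hR => by
        refine ⟨1 / u R, fun k => ?_⟩
        have := hM0 k
        have h1 := hMle k R hR
        have h2 := hu.1 R hR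
        rw [div_mul_eq_mul_div, div_le_iff₀ this, div_mul_eq_mul_div, div_mul_eq_mul_div,
          le_div_iff₀ h2]
        simp only [id]
        calc _ = (1 / 2 : ℝ) ^ k * (R ^ k * u R) := by ring
          _ ≤ (1 / 2 : ℝ) ^ k * M k := by gcongr
          _ = _ := by ring)
    have hf : f ∈ ⋃ n : {n : ℕ // 1 ≤ n}, Hinf fun t : ℝ => u ((n.1 : ℝ) * t) := by
      refine mem_iUnion.2 ⟨⟨1, le_rfl⟩, hfd, 2, fun z => ?_⟩
      have h2 := hu.1 ‖z‖ (norm_nonneg z)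
      have := hfu z (1 / u ‖z‖) (fun k => by
        have := hM0 k
        have h1 := hMle k ‖z‖ (norm_nonneg z)
        rw [div_mul_eq_mul_div, div_le_iff₀ this, div_mul_eq_mul_div, div_mul_eq_mul_div,
          le_div_iff₀ h2]
        simp only [id]
        calc _ = (1 / 2 : ℝ) ^ k * (‖z‖ ^ k * u ‖z‖) := by ring
          _ ≤ (1 / 2 : ℝ) ^ k * M k := by gcongr
          _ = _ := by ring)
      simp only [Nat.cast_one, one_mul]
      rw [div_mul_eq_mul_div, le_div_iff₀ h2] at this
      linarith
    obtain ⟨⟨n, hn⟩, -, C, hC⟩ := mem_iUnion.1 (hsub hf)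
    have hn' : (1 : ℝ) ≤ n := by exact_mod_cast hn
    have hn0 : (0 : ℝ) < n := by linarith
    refine aux_main hu hun huc hw hwn hmg hMleast (A := |C|) (B := 2 * n) (abs_nonneg C)
      (by linarith) fun j t ht => ?_
    have hMj := hM0 j
    have htn : 0 ≤ t / n := by positivity
    have h1 := hfl j (t / n) htn
    have h2 := hC ((t / n : ℝ) : ℂ)
    rw [Complex.norm_real, Real.norm_of_nonneg htn] at h2
    simp only at h2
    rw [mul_div_cancel₀ _ hn0.ne'] at h2
    have h3 : (1 / 2) ^ j / M j * (t / n) ^ j * w t ≤ |C| :=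
      (mul_le_mul_of_nonneg_right h1 (hw.1 t ht).le).trans (h2.trans (le_abs_self C))
    calc t ^ j * w t = (2 * n) ^ j * M j * ((1 / 2) ^ j / M j * (t / n) ^ j * w t) := by
          rw [mul_pow, div_pow, div_pow, one_pow]; field_simp
      _ ≤ (2 * n) ^ j * M j * |C| := by gcongr
      _ = _ := by ring
  · rintro ⟨c, hc, C, hC, h⟩ f hf
    rw [mem_iInter] at hf ⊢
    rintro ⟨d, hd⟩
    have hc0 : 0 < c := by linarith
    have := hf ⟨d / c, by positivity⟩
    refine aux_fwd (a := d / c) (by positivity) hC h (fun t ht => le_of_eq ?_) this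
    congr 1
    show d * t = _
    field_simp
  · intro hsub
    by_cases hk : ∃ k : ℕ, ∀ (j : ℕ) (t : ℝ), 0 ≤ t → t ^ j * w t ≤ 4 ^ k * (k + 1 : ℝ) ^ j * M j
    · obtain ⟨k, hk⟩ := hk
      exact aux_main hu hun huc hw hwn hmg hMleast (A := 4 ^ k) (B := k + 1) (by positivity)
        (by simp) hk
    · exfalso
      push Not at hk
      choose p s hs0 hs using hk
      set b : ℕ → ℝ := fun k => (1 / 2) ^ k / (M (p k) * (k + 1 : ℝ) ^ p k) with hbdef
      have hb0 : ∀ k, 0 ≤ b k := fun k => by have := hM0 (p k); positivity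
      -- main bound on large `k`
      have hlarge : ∀ (c : ℝ) (k : ℕ) (R : ℝ), 0 < c → 1 / (k + 1 : ℝ) ≤ c → 0 ≤ R →
          b k * R ^ p k * u (c * R) ≤ (1 / 2) ^ k := by
        intro c k R hc hck hR
        have hMp := hM0 (p k)
        have h0 : (0 : ℝ) ≤ R / (k + 1) := by positivity
        have h1 := hMle (p k) _ h0
        have h2 : u (c * R) ≤ u (R / (k + 1)) := by
          refine hu.2.2.1 h0 (show (0 : ℝ) ≤ _ by positivity) ?_
          rw [div_eq_mul_one_div, mul_comm]
          gcongr
        have := hb0 k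
        calc _ ≤ b k * R ^ p k * u (R / (k + 1)) := by gcongr
          _ = (1 / 2) ^ k / M (p k) * ((R / (k + 1)) ^ p k * u (R / (k + 1))) := by
            generalize u (R / (k + 1)) = q
            simp only [hbdef]
            rw [div_pow R]; field_simp
          _ ≤ (1 / 2) ^ k / M (p k) * M (p k) := by gcongr
          _ = _ := by field_simp
      -- bound for each `k`
      have hsmall : ∀ (c : ℝ), 0 < c → ∀ k : ℕ, ∃ K : ℝ, 0 ≤ K ∧ ∀ R : ℝ, 0 ≤ R →
          b k * R ^ p k * u (c * R) ≤ K * (1 / 2) ^ k := by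
        intro c hc k
        obtain ⟨K, hK0, hK⟩ := aux_bdd hu (p k)
        have := hb0 k
        refine ⟨b k / c ^ p k * K * 2 ^ k, by positivity, fun R hR => ?_⟩
        have h1 := hK (c * R) (by positivity)
        calc _ = b k / c ^ p k * ((c * R) ^ p k * u (c * R)) := by
              rw [mul_pow]; field_simp
          _ ≤ b k / c ^ p k * K := by gcongr
          _ = _ := by rw [one_div, inv_pow]; field_simp
      have hall : ∀ c : ℝ, 0 < c → ∃ K : ℝ, ∀ k R, 0 ≤ R →
          b k * R ^ p k * u (c * R) ≤ K * (1 / 2) ^ k := by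
        intro c hc
        choose K hK0 hK using hsmall c hc
        obtain ⟨k₀, hk₀⟩ := exists_nat_one_div_lt hc
        have hsum0 : 0 ≤ ∑ i ∈ Finset.range k₀, K i := Finset.sum_nonneg fun i _ => hK0 i
        refine ⟨1 + ∑ i ∈ Finset.range k₀, K i, fun k R hR => ?_⟩
        by_cases hkk : k < k₀
        · refine (hK k R hR).trans ?_
          gcongr
          have := Finset.single_le_sum (fun i _ => hK0 i) (Finset.mem_range.2 hkk)
          linarith
        · push Not at hkk
          refine (hlarge c k R hc (le_trans ?_ hk₀.le) hR).trans ?_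
          · gcongr
          · have : (0 : ℝ) < (1 / 2) ^ k := by positivity
            nlinarith
      obtain ⟨f, hfd, hfu, hfl⟩ := aux_entire b p hb0 (fun R hR => by
        obtain ⟨K, hK⟩ := hall 1 one_pos
        refine ⟨K / u (1 * R), fun k => ?_⟩
        rw [div_mul_eq_mul_div K, le_div_iff₀ (hu.1 _ (by linarith))]
        exact hK k R hR)
      have hf : f ∈ ⋂ c : {c : ℝ // 0 < c}, Hinf fun t : ℝ => u (c.1 * t) := by
        rw [mem_iInter]
        rintro ⟨c, hc⟩
        obtain ⟨K, hK⟩ := hall c hc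
        refine ⟨hfd, K * 2, fun z => ?_⟩
        have hz := norm_nonneg z
        have hup := hu.1 (c * ‖z‖) (by positivity)
        have := hfu z (K / u (c * ‖z‖)) (fun k => by
          rw [div_mul_eq_mul_div K, le_div_iff₀ hup]
          exact hK k _ hz)
        rw [div_mul_eq_mul_div, le_div_iff₀ hup] at this
        exact this
      obtain ⟨-, C, hC⟩ := mem_iInter.1 (hsub hf) ⟨1, one_pos⟩
      obtain ⟨k, hkC⟩ := pow_unbounded_of_one_lt C (show (1 : ℝ) < 2 by norm_num)
      have h1 := hfl k (s k) (hs0 k)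
      have h2 := hC ((s k : ℝ) : ℂ)
      rw [Complex.norm_real, Real.norm_of_nonneg (hs0 k)] at h2
      simp only [one_mul] at h2
      have h3 := (mul_le_mul_of_nonneg_right h1 (hw.1 _ (hs0 k)).le).trans h2
      have hMp := hM0 (p k)
      have h4 : (2 : ℝ) ^ k ≤ b k * s k ^ p k * w (s k) := by
        calc (2 : ℝ) ^ k = (1 / 2) ^ k / (M (p k) * (k + 1 : ℝ) ^ p k) *
              (4 ^ k * (k + 1 : ℝ) ^ p k * M (p k)) := by
              rw [show (4 : ℝ) = 2 * 2 by norm_num, mul_pow, one_div, inv_pow]; field_simp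
          _ ≤ (1 / 2) ^ k / (M (p k) * (k + 1 : ℝ) ^ p k) * (s k ^ p k * w (s k)) := by
              exact mul_le_mul_of_nonneg_left (hs k).le (by positivity)
          _ = _ := by rw [hbdef]; ring
      linarith
end

section
/- Let u and w be normalized weights with u convex. Then the following are equivalent: (i) there exist c ≥ 1 and C ≥ 1 with w(t)^c ≤ C·u(t) for all t ≥ 0; (ii) ⋃_{n∈ℕ, n≥1} H^∞_{u^n}(ℂ) ⊆ ⋃_{n∈ℕ, n≥1} H^∞_{w^n}(ℂ), where u^c(t) := u(t)^c; (iii) ⋂_{c>0} H^∞_{u^c}(ℂ) ⊆ ⋂_{c>0} H^∞_{w^c}(ℂ). -/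
open Filter Set

lemma wt_le_one {u : ℝ → ℝ} (hu : IsWeight u) (hun : NormalizedWeight u) {t : ℝ} (ht : 0 ≤ t) :
    u t ≤ 1 := by
  rw [← hun 0 le_rfl zero_le_one]
  exact hu.2.2.1 (Set.mem_Ici.2 le_rfl) (Set.mem_Ici.2 ht) ht

lemma bdd_pow {u : ℝ → ℝ} (hu : IsWeight u) (hun : NormalizedWeight u) (k : ℕ) {a : ℝ}
    (ha : 0 < a) : ∃ K : ℝ, 1 ≤ K ∧ ∀ t : ℝ, 0 ≤ t → t ^ k * u t ^ a ≤ K := by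
  obtain ⟨m, hm⟩ := exists_nat_ge ((k : ℝ) / a)
  have h1 := (hu.2.2.2 m).eventually (gt_mem_nhds (zero_lt_one))
  obtain ⟨T, hT⟩ := eventually_atTop.1 h1
  refine ⟨(max T 1) ^ k, one_le_pow₀ (le_max_right _ _), fun t ht => ?_⟩
  have hp := hu.1 t ht
  have h1' := wt_le_one hu hun ht
  rcases le_total t (max T 1) with h | h
  · calc t ^ k * u t ^ a ≤ t ^ k * 1 := by
          gcongr
          exact Real.rpow_le_one hp.le h1' ha.le
      _ = t ^ k := mul_one _
      _ ≤ _ := by gcongr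
  · have h2 := (hT t ((le_max_left _ _).trans h)).le
    have ht1 : 1 ≤ t := (le_max_right _ _).trans h
    have h3 : t ^ k ≤ (t ^ m) ^ a := by
      rw [← Real.rpow_natCast_mul ht, ← Real.rpow_natCast]
      apply Real.rpow_le_rpow_of_exponent_le ht1
      rwa [div_le_iff₀ ha] at hm
    calc t ^ k * u t ^ a ≤ (t ^ m) ^ a * u t ^ a := by gcongr
      _ = (t ^ m * u t) ^ a := by rw [Real.mul_rpow (by positivity) hp.le]
      _ ≤ 1 := Real.rpow_le_one (by positivity) h2 ha.le
      _ ≤ _ := one_le_pow₀ (le_max_right _ _)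

lemma subgrad {φ : ℝ → ℝ} (h : ConvexOn ℝ Set.univ φ) (x : ℝ) :
    ∃ s : ℝ, ∀ y, φ x + s * (y - x) ≤ φ y := by
  obtain ⟨s, hs1, hs2⟩ := exists_between_of_forall_le
    (s := (fun y => (φ x - φ y) / (x - y)) '' Set.Iio x)
    (t := (fun y => (φ y - φ x) / (y - x)) '' Set.Ioi x)
    (Set.nonempty_Iio.image _) (Set.nonempty_Ioi.image _) (by
      rintro _ ⟨y, hy, rfl⟩ _ ⟨z, hz, rfl⟩
      exact h.slope_mono_adjacent (Set.mem_univ _) (Set.mem_univ _) hy hz)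
  refine ⟨s, fun y => ?_⟩
  rcases lt_trichotomy y x with hy | hy | hy
  · have := hs1 ⟨y, hy, rfl⟩
    simp only at this
    rw [div_le_iff₀ (by linarith)] at this
    nlinarith
  · subst hy; simp
  · have := hs2 ⟨y, hy, rfl⟩
    simp only at this
    rw [le_div_iff₀ (by linarith)] at this
    nlinarith

lemma monom {u : ℝ → ℝ} (hu : IsWeight u) (hun : NormalizedWeight u) (huc : ConvexWeight u)
    {a : ℝ} (ha : 0 < a) : ∃ c : ℝ, 0 < c ∧ ∀ t : ℝ, 0 ≤ t → ∃ (j : ℕ) (b : ℝ), 0 ≤ b ∧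
      (∀ r : ℝ, 0 ≤ r → b * r ^ j * u r ^ a ≤ 1) ∧ c ≤ b * t ^ j * u t ^ (a / 2) := by
  obtain ⟨K, hK1, hK⟩ := bdd_pow hu hun 1 (half_pos ha)
  refine ⟨K⁻¹, by positivity, fun t ht => ?_⟩
  rcases le_or_gt t 1 with h1 | h1
  · refine ⟨0, 1, zero_le_one, fun r hr => ?_, ?_⟩
    · simpa using Real.rpow_le_one (hu.1 r hr).le (wt_le_one hu hun hr) ha.le
    · rw [hun t ht h1]; simpa using inv_le_one_of_one_le₀ hK1
  have ht0 : 0 < t := by linarith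
  obtain ⟨s, hs⟩ := subgrad huc (Real.log t)
  rw [Real.exp_log ht0] at hs
  have hx : 0 < Real.log t := Real.log_pos h1
  set x := Real.log t with hxdef
  have hφ : Real.log (u t) ≤ 0 := Real.log_nonpos (hu.1 t ht).le (wt_le_one hu hun ht)
  have hs0 : 0 ≤ s := by
    have := hs 0
    rw [Real.exp_zero, hun 1 zero_le_one le_rfl, Real.log_one] at this
    by_contra hneg
    push Not at hneg
    nlinarith
  have has0 : 0 ≤ a * s := by positivity
  set j := ⌊a * s⌋₊ with hj
  have hj1 : (j : ℝ) ≤ a * s := Nat.floor_le has0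
  have hj2 : a * s < j + 1 := Nat.lt_floor_add_one _
  have key : ∀ r : ℝ, 1 ≤ r →
      Real.exp (-a * Real.log (u t) - (1 + j) * x) * r ^ j * u r ^ a ≤ 1 := by
    intro r hr
    have hr0 : 0 < r := by linarith
    have hy : 0 ≤ Real.log r := Real.log_nonneg hr
    have h2 := hs (Real.log r)
    rw [Real.exp_log hr0] at h2
    have e1 : r ^ j = Real.exp (j * Real.log r) := by
      rw [mul_comm, Real.exp_mul, Real.exp_log hr0, Real.rpow_natCast]
    rw [e1, Real.rpow_def_of_pos (hu.1 r hr0.le), ← Real.exp_add, ← Real.exp_add, Real.exp_le_one_iff]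
    have h3 := mul_le_mul_of_nonneg_left h2 ha.le
    rcases le_total (Real.log r) x with h | h <;> nlinarith
  refine ⟨j, Real.exp (-a * Real.log (u t) - (1 + j) * x), (Real.exp_pos _).le, fun r hr => ?_, ?_⟩
  · rcases le_total r 1 with h | h
    · have k1 := key 1 le_rfl
      rw [hun 1 zero_le_one le_rfl] at k1
      rw [hun r hr h]
      refine le_trans ?_ k1
      gcongr
    · exact key r h
  · have e1 : t ^ j = Real.exp (j * x) := by
      rw [mul_comm, Real.exp_mul, Real.exp_log ht0, Real.rpow_natCast]
    have h4 := hK t ht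
    have e2 : u t ^ (a / 2) = Real.exp (Real.log (u t) * (a / 2)) := Real.rpow_def_of_pos (hu.1 t ht) _
    have e3 : t ^ 1 = Real.exp x := by rw [Real.exp_log ht0, pow_one]
    rw [e2, e3, ← Real.exp_add] at h4
    rw [e1, e2, ← Real.exp_add, ← Real.exp_add]
    calc K⁻¹ ≤ (Real.exp (x + Real.log (u t) * (a / 2)))⁻¹ := by gcongr
      _ = _ := by rw [← Real.exp_neg]; congr 1; ring

lemma build {u : ℝ → ℝ} (hu : IsWeight u) (hun : NormalizedWeight u) (j : ℕ → ℕ) (b : ℕ → ℝ)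
    (hb : ∀ n, 0 ≤ b n)
    (h : ∀ n r, 0 ≤ r → b n * r ^ j n * u r ^ (1 / ((n : ℝ) + 1)) ≤ 1) :
    ∃ f : ℂ → ℂ, (∀ c : ℝ, 0 < c → f ∈ Hinf fun t => u t ^ c) ∧
      ∀ (n : ℕ) (t : ℝ), 0 ≤ t → (1 / 2) ^ n * (b n * t ^ j n) ≤ ‖f t‖ := by
  have hbd : ∀ c : ℝ, 0 < c → ∃ K : ℝ, ∀ n r, 0 ≤ r → b n * r ^ j n * u r ^ c ≤ K := by
    intro c hc
    choose K hK1 hK using fun n => bdd_pow hu hun (j n) hc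
    obtain ⟨N, hN⟩ := exists_nat_gt (1 / c)
    refine ⟨1 + ∑ n ∈ Finset.range N, b n * K n, fun n r hr => ?_⟩
    have hnn : ∀ n ∈ Finset.range N, 0 ≤ b n * K n := fun n _ =>
      mul_nonneg (hb n) (zero_le_one.trans (hK1 n))
    rcases lt_or_ge n N with hn | hn
    · have h1 := Finset.single_le_sum hnn (Finset.mem_range.2 hn)
      have h2 := mul_le_mul_of_nonneg_left (hK n r hr) (hb n)
      linarith
    · have h1 := Finset.sum_nonneg hnn
      have h2 : u r ^ c ≤ u r ^ (1 / ((n : ℝ) + 1)) := by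
        apply Real.rpow_le_rpow_of_exponent_ge (hu.1 r hr) (wt_le_one hu hun hr)
        have : (N : ℝ) ≤ n := by exact_mod_cast hn
        rw [div_lt_iff₀ hc] at hN
        rw [div_le_iff₀ (by positivity)]
        nlinarith
      have h3 := mul_le_mul_of_nonneg_left h2 (mul_nonneg (hb n) (pow_nonneg hr (j n)))
      linarith [h n r hr]
  have hnorm : ∀ n (z : ℂ), ‖((((1 / 2 : ℝ) ^ n * b n : ℝ)) : ℂ) * z ^ j n‖ =
      (1 / 2) ^ n * (b n * ‖z‖ ^ j n) := by
    intro n z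
    rw [norm_mul, norm_pow, Complex.norm_real, Real.norm_of_nonneg
      (mul_nonneg (by positivity) (hb n)), mul_assoc]
  have hbd' : ∀ c : ℝ, 0 < c → ∃ K : ℝ, ∀ n r, 0 ≤ r →
      (1 / 2) ^ n * (b n * r ^ j n) ≤ (1 / 2) ^ n * (K / u r ^ c) := by
    intro c hc
    obtain ⟨K, hK⟩ := hbd c hc
    refine ⟨K, fun n r hr => ?_⟩
    have := Real.rpow_pos_of_pos (hu.1 r hr) c
    gcongr
    rw [le_div_iff₀ this]
    exact hK n r hr
  refine ⟨fun z => ∑' n, ((((1 / 2 : ℝ) ^ n * b n : ℝ)) : ℂ) * z ^ j n, ?_, ?_⟩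
  · intro c hc
    refine ⟨?_, ?_⟩
    · obtain ⟨K, hK⟩ := hbd' c hc
      intro z
      have hd : DifferentiableOn ℂ (fun z : ℂ => ∑' n, ((((1 / 2 : ℝ) ^ n * b n : ℝ)) : ℂ) * z ^ j n)
          (Metric.ball 0 (‖z‖ + 1)) := by
        refine Complex.differentiableOn_tsum_of_summable_norm
          (u := fun n => (1 / 2) ^ n * (K / u (‖z‖ + 1) ^ c))
          (summable_geometric_two.mul_right _) (fun n => by fun_prop) Metric.isOpen_ball ?_
        intro n y hy
        rw [hnorm]
        refine le_trans ?_ (hK n (‖z‖ + 1) (by positivity))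
        have hy' : ‖y‖ ≤ ‖z‖ + 1 := (mem_ball_zero_iff.1 hy).le
        have := hb n
        gcongr
      exact hd.differentiableAt (Metric.isOpen_ball.mem_nhds (by simp))
    · obtain ⟨K, hK⟩ := hbd' c hc
      refine ⟨2 * K, fun z => ?_⟩
      have hp := Real.rpow_pos_of_pos (hu.1 ‖z‖ (norm_nonneg z)) c
      have := tsum_of_norm_bounded (f := fun n => ((((1 / 2 : ℝ) ^ n * b n : ℝ)) : ℂ) * z ^ j n)
        (hasSum_geometric_two.mul_right (K / u ‖z‖ ^ c))
        (fun n => by rw [hnorm]; exact hK n ‖z‖ (norm_nonneg z))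
      calc _ ≤ 2 * (K / u ‖z‖ ^ c) * u ‖z‖ ^ c := by gcongr
        _ = 2 * K := by field_simp
  · intro n t ht
    obtain ⟨K, hK⟩ := hbd' 1 one_pos
    have hnn : ∀ m, 0 ≤ (1 / 2 : ℝ) ^ m * (b m * t ^ j m) := fun m => by
      have := hb m
      positivity
    have hsum : Summable fun m => (1 / 2 : ℝ) ^ m * (b m * t ^ j m) :=
      Summable.of_nonneg_of_le hnn (fun m => hK m t ht) (summable_geometric_two.mul_right _)
    have e : ∑' n, ((((1 / 2 : ℝ) ^ n * b n : ℝ)) : ℂ) * (t : ℂ) ^ j n =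
        ((∑' m, (1 / 2 : ℝ) ^ m * (b m * t ^ j m) : ℝ) : ℂ) := by
      rw [Complex.ofReal_tsum]
      congr 1
      ext m
      push_cast
      ring
    simp only [e]
    rw [Complex.norm_real]
    exact (hsum.le_tsum n fun m _ => hnn m).trans (le_abs_self _)

lemma counter (u w : ℝ → ℝ) (hu : IsWeight u) (hun : NormalizedWeight u)
    (huc : ConvexWeight u) (hw : IsWeight w) (hwn : NormalizedWeight w)
    (hno : ¬ ∃ c : ℝ, 1 ≤ c ∧ ∃ C : ℝ, 1 ≤ C ∧ ∀ t : ℝ, 0 ≤ t → (w t) ^ c ≤ C * u t) :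
    ∃ f : ℂ → ℂ, (∀ c : ℝ, 0 < c → f ∈ Hinf fun t => u t ^ c) ∧
      ∀ m : ℕ, f ∉ Hinf fun t => w t ^ (m : ℝ) := by
  push Not at hno
  choose k hk0 hk using fun n : ℕ => monom hu hun huc (a := 1 / ((n : ℝ) + 1)) (by positivity)
  have hex : ∀ n : ℕ, ∃ t, 0 ≤ t ∧
      ((n : ℝ) + 1) * 2 ^ n / k n * u t ^ (1 / ((n : ℝ) + 1) / 2) ≤ w t ^ ((n : ℝ) + 1) := by
    intro n
    have hA : 0 < ((n : ℝ) + 1) * 2 ^ n / k n := by have := hk0 n; positivity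
    set A := ((n : ℝ) + 1) * 2 ^ n / k n
    obtain ⟨t, ht, h⟩ := hno (2 * ((n : ℝ) + 1) ^ 2) (by nlinarith [Nat.cast_nonneg (α := ℝ) n])
      (max 1 (A ^ (2 * ((n : ℝ) + 1)))) (le_max_left _ _)
    refine ⟨t, ht, ?_⟩
    have hup := hu.1 t ht
    have hwp := hw.1 t ht
    have h1 : A ^ (2 * ((n : ℝ) + 1)) * u t ≤ w t ^ (2 * ((n : ℝ) + 1) ^ 2) :=
      le_trans (by gcongr; exact le_max_right _ _) h.le
    have hq : 0 ≤ 1 / ((n : ℝ) + 1) / 2 := by positivity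
    have h2 := Real.rpow_le_rpow (by positivity) h1 hq
    rw [Real.mul_rpow (by positivity) hup.le, ← Real.rpow_mul hA.le, ← Real.rpow_mul hwp.le] at h2
    have e1 : 2 * ((n : ℝ) + 1) * (1 / ((n : ℝ) + 1) / 2) = 1 := by field_simp
    have e2 : 2 * ((n : ℝ) + 1) ^ 2 * (1 / ((n : ℝ) + 1) / 2) = (n : ℝ) + 1 := by field_simp
    rwa [e1, e2, Real.rpow_one] at h2
  choose t ht0 ht using hex
  choose j b hb hb1 hb2 using fun n => hk n (t n) (ht0 n)
  obtain ⟨f, hf1, hf2⟩ := build hu hun j b hb hb1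
  refine ⟨f, hf1, fun m hm => ?_⟩
  obtain ⟨-, D, hD⟩ := hm
  obtain ⟨N, hN⟩ := exists_nat_gt D
  set n := max m N with hn
  have hmn : (m : ℝ) ≤ n := by exact_mod_cast le_max_left m N
  have hNn : (N : ℝ) ≤ n := by exact_mod_cast le_max_right m N
  have h1 := hD (t n)
  have h2 := hf2 n (t n) (ht0 n)
  simp only [Complex.norm_real, Real.norm_of_nonneg (ht0 n)] at h1
  have hup := Real.rpow_pos_of_pos (hu.1 _ (ht0 n)) (1 / ((n : ℝ) + 1) / 2)
  have hwm : w (t n) ^ ((n : ℝ) + 1) ≤ w (t n) ^ (m : ℝ) :=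
    Real.rpow_le_rpow_of_exponent_ge (hw.1 _ (ht0 n)) (wt_le_one hw hwn (ht0 n)) (by linarith)
  have hkn := hk0 n
  have h3 : (n : ℝ) + 1 ≤ ‖f (t n)‖ * w (t n) ^ (m : ℝ) := by
    set U := u (t n) ^ (1 / ((n : ℝ) + 1) / 2)
    calc (n : ℝ) + 1 = ((1 / 2) ^ n * (k n / U)) * (((n : ℝ) + 1) * 2 ^ n / k n * U) := by
          rw [one_div, inv_pow]; field_simp
      _ ≤ ((1 / 2) ^ n * (b n * t n ^ j n)) * w (t n) ^ (m : ℝ) := by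
          have hl : k n / U ≤ b n * t n ^ j n := by
            rw [div_le_iff₀ hup]; exact hb2 n
          have hr := (ht n).trans hwm
          have : 0 ≤ b n * t n ^ j n := le_trans (by positivity) hl
          gcongr
      _ ≤ _ := by
          have := Real.rpow_pos_of_pos (hw.1 _ (ht0 n)) (m : ℝ)
          gcongr
  linarith

/-- Transfer of membership under the comparison (i). -/
lemma transfer {u w : ℝ → ℝ} (hu : IsWeight u) (hw : IsWeight w) (hwn : NormalizedWeight w)
    {c C : ℝ} (hC : 1 ≤ C) (h : ∀ t : ℝ, 0 ≤ t → (w t) ^ c ≤ C * u t) {p q : ℝ} (hp : 0 < p)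
    (hq : c * p ≤ q) {f : ℂ → ℂ} (hf : f ∈ Hinf fun t => u t ^ p) : f ∈ Hinf fun t => w t ^ q := by
  obtain ⟨hd, D, hD⟩ := hf
  refine ⟨hd, C ^ p * D, fun z => ?_⟩
  have hz := norm_nonneg z
  have hwp := hw.1 _ hz
  have hup := hu.1 _ hz
  calc ‖f z‖ * w ‖z‖ ^ q ≤ ‖f z‖ * (C ^ p * u ‖z‖ ^ p) := by
        gcongr
        calc w ‖z‖ ^ q ≤ w ‖z‖ ^ (c * p) :=
              Real.rpow_le_rpow_of_exponent_ge hwp (wt_le_one hw hwn hz) hq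
          _ = (w ‖z‖ ^ c) ^ p := Real.rpow_mul hwp.le _ _
          _ ≤ (C * u ‖z‖) ^ p := Real.rpow_le_rpow (by positivity) (h _ hz) hp.le
          _ = _ := Real.mul_rpow (by positivity) hup.le
    _ = C ^ p * (‖f z‖ * u ‖z‖ ^ p) := by ring
    _ ≤ C ^ p * D := by gcongr; exact hD z

/-- Theorem: for normalized weights `u`, `w` with `u` convex: `u ≼^𝔠 w` is
equivalent to inclusion of the exponential-type unions, and to inclusion of
the exponential-type intersections. -/
theorem stmt14 (u w : ℝ → ℝ) (hu : IsWeight u) (hun : NormalizedWeight u)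
    (huc : ConvexWeight u) (hw : IsWeight w) (hwn : NormalizedWeight w) :
    ((∃ c : ℝ, 1 ≤ c ∧ ∃ C : ℝ, 1 ≤ C ∧
        ∀ t : ℝ, 0 ≤ t → (w t) ^ c ≤ C * u t) ↔
      (⋃ n : {n : ℕ // 1 ≤ n}, Hinf fun t : ℝ => u t ^ (n.1 : ℝ)) ⊆
        ⋃ n : {n : ℕ // 1 ≤ n}, Hinf fun t : ℝ => w t ^ (n.1 : ℝ)) ∧
    ((∃ c : ℝ, 1 ≤ c ∧ ∃ C : ℝ, 1 ≤ C ∧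
        ∀ t : ℝ, 0 ≤ t → (w t) ^ c ≤ C * u t) ↔
      (⋂ c : {c : ℝ // 0 < c}, Hinf fun t : ℝ => u t ^ c.1) ⊆
        ⋂ c : {c : ℝ // 0 < c}, Hinf fun t : ℝ => w t ^ c.1) := by
  refine ⟨⟨?_, ?_⟩, ⟨?_, ?_⟩⟩
  · rintro ⟨c, hc, C, hC, h⟩ f hf
    obtain ⟨⟨n, hn⟩, hf⟩ := Set.mem_iUnion.1 hf
    obtain ⟨m, hm⟩ := exists_nat_ge (c * n)
    have hn' : (1 : ℝ) ≤ n := by exact_mod_cast hn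
    refine Set.mem_iUnion.2 ⟨⟨m + 1, by omega⟩, ?_⟩
    exact transfer hu hw hwn hC h (by linarith) (by push_cast; linarith) hf
  · intro h
    by_contra hno
    obtain ⟨f, hf1, hf2⟩ := counter u w hu hun huc hw hwn hno
    obtain ⟨⟨n, hn⟩, hf⟩ := Set.mem_iUnion.1
      (h (Set.mem_iUnion.2 ⟨⟨1, le_rfl⟩, hf1 _ (by norm_num)⟩))
    exact hf2 n hf
  · rintro ⟨c, hc, C, hC, h⟩ f hf
    refine Set.mem_iInter.2 fun ⟨q, hq⟩ => ?_
    have hc0 : 0 < c := by linarith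
    exact transfer hu hw hwn hC h (div_pos hq hc0) (mul_div_cancel₀ q hc0.ne').le
      (Set.mem_iInter.1 hf ⟨q / c, div_pos hq hc0⟩)
  · intro h
    by_contra hno
    obtain ⟨f, hf1, hf2⟩ := counter u w hu hun huc hw hwn hno
    have := Set.mem_iInter.1 (h (Set.mem_iInter.2 fun c => hf1 c.1 c.2)) ⟨1, one_pos⟩
    refine hf2 1 ?_
    simpa using this
end

section
/- Let u be a normalized convex weight. Then: (i) there exists B ≥ 1 such that u(t) ≤ ũ(t) ≤ B·u(t)^{1/2} for all t ≥ 0; (ii) if in addition u is of moderate growth, then there exist B ≥ 1 and H ≥ 1 such that u(t) ≤ ũ(t) ≤ B·u(t/H) for all t ≥ 0. -/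
open Filter Set

theorem aux_slope (φ : ℝ → ℝ) (hc : ConvexOn ℝ Set.univ φ) (hn : ∀ s, 0 ≤ φ s) (h0 : φ 0 = 0)
    (s0 : ℝ) (hs0 : 0 < s0) (hg : s0 ≤ φ s0) :
    ∃ j : ℕ, 1 ≤ j ∧ ∀ s, φ s0 / 2 + j * (s - s0) ≤ φ s := by
  set p := derivWithin φ (Ioi s0) s0 with hp
  have hint : s0 ∈ interior (Set.univ : Set ℝ) := by simp
  have hsup : ∀ s, φ s0 + p * (s - s0) ≤ φ s := by
    intro s
    rcases lt_trichotomy s s0 with h | h | h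
    · have h1 := hc.slope_le_leftDeriv_of_mem_interior (Set.mem_univ s) hint h
      have h2 := hc.leftDeriv_le_rightDeriv_of_mem_interior hint
      have h3 := h1.trans h2
      rw [slope_def_field, div_le_iff₀ (by linarith)] at h3
      nlinarith
    · subst h; simp
    · have h1 := hc.rightDeriv_le_slope_of_mem_interior hint (Set.mem_univ s) h
      rw [slope_def_field, le_div_iff₀ (by linarith)] at h1
      nlinarith
  have hp1 : 1 ≤ p := by
    have := hsup 0
    rw [h0] at this
    by_contra hlt
    push Not at hlt
    nlinarith
  have hj1 : 1 ≤ ⌊p⌋₊ := Nat.one_le_floor_iff p |>.2 hp1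
  have hjle : (⌊p⌋₊ : ℝ) ≤ p := Nat.floor_le (by linarith)
  have hjlt : p < (⌊p⌋₊ : ℝ) + 1 := Nat.lt_floor_add_one p
  have hj1' : (1 : ℝ) ≤ (⌊p⌋₊ : ℝ) := by exact_mod_cast hj1
  refine ⟨⌊p⌋₊, hj1, fun s => ?_⟩
  have h1 := hsup s
  have h2 := hn s
  have h3 := hn s0
  rcases le_total s s0 with h | h
  · nlinarith
  · nlinarith

theorem aux_le_one (u : ℝ → ℝ) (hu : IsWeight u) (hun : NormalizedWeight u) (t : ℝ) (ht : 0 ≤ t) :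
    u t ≤ 1 := by
  have := hu.2.2.1 (Set.mem_Ici.2 le_rfl) (Set.mem_Ici.2 ht) ht
  rwa [hun 0 le_rfl zero_le_one] at this

theorem aux_bdd_s15 (u : ℝ → ℝ) (z : ℂ) : BddAbove {x : ℝ | ∃ f ∈ BClass u, x = ‖f z‖} :=
  ⟨1 / u ‖z‖, by rintro x ⟨f, hf, rfl⟩; exact hf.2 z⟩

theorem aux_one_mem (u : ℝ → ℝ) (hu : IsWeight u) (hun : NormalizedWeight u) :
    (fun _ => 1 : ℂ → ℂ) ∈ BClass u := by
  refine ⟨differentiable_const _, fun z => ?_⟩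
  rw [norm_one, le_div_iff₀ (hu.1 _ (norm_nonneg z)), one_mul]
  exact aux_le_one u hu hun _ (norm_nonneg z)

theorem aux_one_le (u : ℝ → ℝ) (hu : IsWeight u) (hun : NormalizedWeight u) (z : ℂ) :
    1 ≤ wTilde u z :=
  le_csSup (aux_bdd_s15 u z) ⟨_, aux_one_mem u hu hun, by simp⟩

theorem aux_lower (u : ℝ → ℝ) (hu : IsWeight u) (hun : NormalizedWeight u) (t : ℝ) (ht : 0 ≤ t) :
    u t ≤ vTilde u t := by
  unfold vTilde
  have h1 := aux_one_le u hu hun (t : ℂ)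
  have h2 : wTilde u (t : ℂ) ≤ 1 / u t := by
    refine csSup_le ⟨_, _, aux_one_mem u hu hun, rfl⟩ ?_
    rintro x ⟨f, hf, rfl⟩
    have := hf.2 (t : ℂ)
    rwa [Complex.norm_real, Real.norm_of_nonneg ht] at this
  rw [le_div_iff₀ (by linarith)]
  rw [le_div_iff₀ (hu.1 t ht)] at h2
  linarith

theorem aux_large (u : ℝ → ℝ) (hu : IsWeight u) (hun : NormalizedWeight u)
    (huc : ConvexWeight u) (t : ℝ) (ht : 1 < t) (hs : t * u t ≤ 1) :
    vTilde u t ≤ (u t) ^ ((1 : ℝ) / 2) := by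
  have ht0 : 0 < t := by linarith
  have hut := hu.1 t ht0.le
  have hlog : 0 < Real.log t := Real.log_pos ht
  obtain ⟨j, hj, hb⟩ := aux_slope _ huc
    (fun s => by
      have h1 := aux_le_one u hu hun _ (Real.exp_pos s).le
      have h2 := Real.log_nonpos (hu.1 _ (Real.exp_pos s).le).le h1
      linarith)
    (by simp [hun 1 zero_le_one le_rfl]) (Real.log t) hlog
    (by
      rw [Real.exp_log ht0]
      have := Real.log_nonpos (by positivity) hs
      rw [Real.log_mul ht0.ne' hut.ne'] at this
      linarith)
  rw [Real.exp_log ht0] at hb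
  set c : ℝ := (t ^ j)⁻¹ * (u t) ^ (-((1 : ℝ) / 2)) with hc
  have hc0 : 0 < c := by positivity
  have hmem : (fun z : ℂ => (c : ℂ) * z ^ j) ∈ BClass u := by
    refine ⟨by fun_prop, fun z => ?_⟩
    rw [norm_mul, norm_pow, Complex.norm_real, Real.norm_of_nonneg hc0.le]
    have huz := hu.1 _ (norm_nonneg z)
    rcases (norm_nonneg z).eq_or_lt with h | h
    · rw [← h] at huz ⊢
      rw [zero_pow (by omega), mul_zero]
      positivity
    · have hbz := hb (Real.log ‖z‖)
      rw [Real.exp_log h] at hbz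
      rw [← Real.log_le_log_iff (by positivity) (by positivity), one_div, Real.log_inv,
        Real.log_mul hc0.ne' (by positivity), hc, Real.log_mul (by positivity) (by positivity),
        Real.log_inv, Real.log_pow, Real.log_pow, Real.log_rpow hut]
      linarith
  have hw : (u t) ^ (-((1 : ℝ) / 2)) ≤ wTilde u (t : ℂ) := by
    refine le_csSup (aux_bdd_s15 u _) ⟨_, hmem, ?_⟩
    rw [norm_mul, norm_pow, Complex.norm_real, Complex.norm_real, Real.norm_of_nonneg hc0.le,
      Real.norm_of_nonneg ht0.le, hc]
    field_simp
  have hpos : 0 < (u t) ^ (-((1 : ℝ) / 2)) := by positivity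
  unfold vTilde
  calc 1 / wTilde u (t : ℂ) ≤ 1 / (u t) ^ (-((1 : ℝ) / 2)) := one_div_le_one_div_of_le hpos hw
    _ = _ := by rw [Real.rpow_neg hut.le, one_div, inv_inv]

theorem aux_main_s15 (u : ℝ → ℝ) (hu : IsWeight u) (hun : NormalizedWeight u)
    (huc : ConvexWeight u) :
    ∃ B : ℝ, 1 ≤ B ∧ ∀ t : ℝ, 0 ≤ t →
      u t ≤ vTilde u t ∧ vTilde u t ≤ B * (u t) ^ ((1 : ℝ) / 2) := by
  have hev := (hu.2.2.2 1).eventually (gt_mem_nhds (zero_lt_one (α := ℝ)))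
  obtain ⟨T0, hT0⟩ := Filter.eventually_atTop.1 hev
  set T := max T0 1 with hT
  have hT1 : 1 ≤ T := le_max_right _ _
  have huT := hu.1 T (by linarith)
  have huT1 := aux_le_one u hu hun T (by linarith)
  have hB : 1 ≤ (u T) ^ (-((1 : ℝ) / 2)) :=
    Real.one_le_rpow_of_pos_of_le_one_of_nonpos huT huT1 (by norm_num)
  refine ⟨_, hB, fun t ht => ⟨aux_lower u hu hun t ht, ?_⟩⟩
  have hut := hu.1 t ht
  have hr : 0 < (u t) ^ ((1 : ℝ) / 2) := by positivity
  rcases le_or_gt t T with h | h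
  · have hv : vTilde u t ≤ 1 := by
      have h1 := aux_one_le u hu hun (t : ℂ)
      unfold vTilde
      rw [div_le_one (by linarith)]
      exact h1
    refine hv.trans ?_
    have hm : u T ≤ u t := hu.2.2.1 (Set.mem_Ici.2 ht) (Set.mem_Ici.2 (by linarith)) h
    have hm2 : (u T) ^ ((1 : ℝ) / 2) ≤ (u t) ^ ((1 : ℝ) / 2) :=
      Real.rpow_le_rpow huT.le hm (by norm_num)
    have hr2 : 0 < (u T) ^ ((1 : ℝ) / 2) := by positivity
    rw [Real.rpow_neg huT.le, inv_mul_eq_div, le_div_iff₀ hr2, one_mul]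
    exact hm2
  · have h1 := hT0 t ((le_max_left _ _).trans h.le)
    rw [pow_one] at h1
    have h2 := aux_large u hu hun huc t (by linarith) h1.le
    nlinarith

/-- Theorem: for a normalized convex weight `u`: (i) `u ≤ ũ ≤ B·u^{1/2}`;
(ii) if `u` is of moderate growth, then `u ≤ ũ ≤ B·u(·/H)`. -/
theorem stmt15 (u : ℝ → ℝ) (hu : IsWeight u) (hun : NormalizedWeight u)
    (huc : ConvexWeight u) :
    (∃ B : ℝ, 1 ≤ B ∧ ∀ t : ℝ, 0 ≤ t →
      u t ≤ vTilde u t ∧ vTilde u t ≤ B * (u t) ^ ((1 : ℝ) / 2)) ∧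
    (ModerateGrowthW u →
      ∃ B : ℝ, 1 ≤ B ∧ ∃ H : ℝ, 1 ≤ H ∧ ∀ t : ℝ, 0 ≤ t →
        u t ≤ vTilde u t ∧ vTilde u t ≤ B * u (t / H)) := by
  obtain ⟨B, hB, h⟩ := aux_main_s15 u hu hun huc
  refine ⟨⟨B, hB, h⟩, ?_⟩
  rintro ⟨H, hH, hm⟩
  have hE : 1 ≤ Real.exp (H * (1 / 2)) := Real.one_le_exp (by linarith)
  refine ⟨B * Real.exp (H * (1 / 2)), by nlinarith, H, hH, fun t ht => ⟨(h t ht).1, ?_⟩⟩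
  have htH : 0 ≤ t / H := by positivity
  have hx := hm (t / H) htH
  rw [mul_div_cancel₀ t (by linarith : H ≠ 0)] at hx
  have hp := hu.1 _ htH
  have hy : (u t) ^ ((1 : ℝ) / 2) ≤ Real.exp (H * (1 / 2)) * u (t / H) := by
    calc (u t) ^ ((1 : ℝ) / 2) ≤ (Real.exp H * u (t / H) ^ 2) ^ ((1 : ℝ) / 2) :=
          Real.rpow_le_rpow (hu.1 t ht).le hx (by norm_num)
      _ = _ := by
        rw [Real.mul_rpow (by positivity) (by positivity), ← Real.exp_mul,
          ← Real.sqrt_eq_rpow, Real.sqrt_sq hp.le]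
  calc vTilde u t ≤ B * (u t) ^ ((1 : ℝ) / 2) := (h t ht).2
    _ ≤ B * (Real.exp (H * (1 / 2)) * u (t / H)) := by gcongr
    _ = _ := by ring
end

section
/- Let u be a normalized weight. Then H^∞_u(ℂ) is not closed under pointwise multiplication: there exist f, g ∈ H^∞_u(ℂ) such that the pointwise product f·g does not belong to H^∞_u(ℂ). In particular, for every M ∈ LC the space H^∞_{v_M}(ℂ) is not closed under pointwise multiplication. -/
open Filter Set

lemma core_series (u : ℝ → ℝ) (hpos : ∀ t, 0 ≤ t → 0 < u t)
    (hlow : ∀ R : ℝ, 0 < R → ∃ c : ℝ, 0 < c ∧ ∀ t, 0 ≤ t → t ≤ R → c ≤ u t)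
    (N : ℕ → ℝ) (hNpos : ∀ j, 0 < N j) (hN : ∀ j t, 0 ≤ t → t ^ j * u t ≤ N j)
    (p : ℕ → ℕ) :
    ∃ f : ℂ → ℂ, f ∈ Hinf u ∧
      ∀ i (t : ℝ), 0 ≤ t → (1 / 2 : ℝ) ^ i * (t ^ p i / N (p i)) ≤ ‖f t‖ := by
  have hterm : ∀ i (z : ℂ), ‖(1 / 2 : ℂ) ^ i * (z ^ p i / (N (p i) : ℂ))‖
      = (1 / 2 : ℝ) ^ i * (‖z‖ ^ p i / N (p i)) := by
    intro i z
    simp [abs_of_pos (hNpos (p i))]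
  have hb : ∀ i t, 0 ≤ t → t ^ p i / N (p i) ≤ 1 / u t := by
    intro i t ht
    rw [div_le_div_iff₀ (hNpos _) (hpos t ht), one_mul]
    exact hN _ _ ht
  have hgeo : Summable (fun i : ℕ => (1 / 2 : ℝ) ^ i) := summable_geometric_two
  have hsumR : ∀ t, 0 ≤ t → Summable (fun i => (1 / 2 : ℝ) ^ i * (t ^ p i / N (p i))) := by
    intro t ht
    refine Summable.of_nonneg_of_le (fun i => ?_) (fun i => ?_) (hgeo.mul_right (1 / u t))
    · have := hNpos (p i)
      positivity
    · exact mul_le_mul_of_nonneg_left (hb i t ht) (by positivity)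
  refine ⟨fun z => ∑' i, (1 / 2 : ℂ) ^ i * (z ^ p i / (N (p i) : ℂ)), ⟨?_, ?_⟩, ?_⟩
  · intro z
    obtain ⟨c, hc, hcu⟩ := hlow (‖z‖ + 1) (by positivity)
    have hd : DifferentiableOn ℂ
        (fun z : ℂ => ∑' i, (1 / 2 : ℂ) ^ i * (z ^ p i / (N (p i) : ℂ)))
        (Metric.ball 0 (‖z‖ + 1)) := by
      refine Complex.differentiableOn_tsum_of_summable_norm (hgeo.mul_right (1 / c)) ?_
        Metric.isOpen_ball ?_
      · intro i
        fun_prop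
      · intro i w hw
        rw [hterm]
        have hw' : ‖w‖ ≤ ‖z‖ + 1 := by
          have := mem_ball_zero_iff.1 hw
          linarith
        refine mul_le_mul_of_nonneg_left ((hb i _ (norm_nonneg w)).trans ?_) (by positivity)
        exact one_div_le_one_div_of_le hc (hcu _ (norm_nonneg w) hw')
    refine hd.differentiableAt (Metric.isOpen_ball.mem_nhds ?_)
    simp
  · refine ⟨2, fun z => ?_⟩
    have h1 : ‖∑' i, (1 / 2 : ℂ) ^ i * (z ^ p i / (N (p i) : ℂ))‖ ≤ 2 * (1 / u ‖z‖) := by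
      refine tsum_of_norm_bounded (hasSum_geometric_two.mul_right (1 / u ‖z‖)) fun i => ?_
      rw [hterm]
      exact mul_le_mul_of_nonneg_left (hb i _ (norm_nonneg z)) (by positivity)
    have hu := hpos _ (norm_nonneg z)
    calc _ ≤ 2 * (1 / u ‖z‖) * u ‖z‖ := mul_le_mul_of_nonneg_right h1 hu.le
      _ = 2 := by field_simp
  · intro i t ht
    have h1 : (∑' i, (1 / 2 : ℂ) ^ i * ((t : ℂ) ^ p i / (N (p i) : ℂ)))
        = ((∑' i, (1 / 2 : ℝ) ^ i * (t ^ p i / N (p i)) : ℝ) : ℂ) := by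
      rw [Complex.ofReal_tsum]
      push_cast
      rfl
    show _ ≤ ‖∑' i, (1 / 2 : ℂ) ^ i * ((t : ℂ) ^ p i / (N (p i) : ℂ))‖
    rw [h1, Complex.norm_real]
    refine le_trans ?_ (le_abs_self _)
    refine (hsumR t ht).le_tsum i fun j _ => ?_
    have := hNpos (p j)
    positivity

lemma core_main (u : ℝ → ℝ) (hpos : ∀ t, 0 ≤ t → 0 < u t)
    (hlow : ∀ R : ℝ, 0 < R → ∃ c : ℝ, 0 < c ∧ ∀ t, 0 ≤ t → t ≤ R → c ≤ u t)
    (hbd : ∀ j : ℕ, ∃ B : ℝ, ∀ t, 0 ≤ t → t ^ j * u t ≤ B) :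
    ∃ f g : ℂ → ℂ, f ∈ Hinf u ∧ g ∈ Hinf u ∧ (fun z : ℂ => f z * g z) ∉ Hinf u := by
  have hlub : ∀ j : ℕ, ∃ n : ℝ, IsLUB ((fun t : ℝ => t ^ j * u t) '' Ici 0) n := by
    intro j
    obtain ⟨B, hB⟩ := hbd j
    refine Real.exists_isLUB ⟨_, 0, self_mem_Ici, rfl⟩ ⟨B, ?_⟩
    rintro _ ⟨t, ht, rfl⟩
    exact hB t ht
  choose N hNlub using hlub
  have hN : ∀ j t, 0 ≤ t → t ^ j * u t ≤ N j := fun j t ht => (hNlub j).1 ⟨t, ht, rfl⟩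
  have hNpos : ∀ j, 0 < N j := fun j => by
    have h := hN j 1 zero_le_one
    have h1 := hpos 1 zero_le_one
    rw [one_pow, one_mul] at h
    linarith
  have hunb : ∀ C : ℝ, 0 < C → ∃ j k, C * (N j * N k) < N (j + k) := by
    intro C hC
    by_contra! hcon
    have hA : 0 < C * N 1 := mul_pos hC (hNpos 1)
    set A := C * N 1 with hAdef
    have hgrow : ∀ n, N n ≤ N 0 * A ^ n := by
      intro n
      induction n with
      | zero => simp
      | succ n ih =>
        calc N (n + 1) ≤ C * (N n * N 1) := hcon n 1
          _ = N n * A := by rw [hAdef]; ring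
          _ ≤ N 0 * A ^ n * A := mul_le_mul_of_nonneg_right ih hA.le
          _ = _ := by ring
    have hu := hpos (2 * A) (by positivity)
    obtain ⟨n, hn⟩ := pow_unbounded_of_one_lt (N 0 / u (2 * A)) (one_lt_two : (1 : ℝ) < 2)
    have h1 := (hN n (2 * A) (by positivity)).trans (hgrow n)
    rw [div_lt_iff₀ hu] at hn
    have h2 : (0 : ℝ) < A ^ n := by positivity
    have h3 := mul_lt_mul_of_pos_right hn h2
    rw [mul_pow] at h1
    nlinarith
  choose p q hpq using fun i : ℕ => hunb (4 ^ i * (i + 1)) (by positivity)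
  obtain ⟨f, hf, hfl⟩ := core_series u hpos hlow N hNpos hN p
  obtain ⟨g, hg, hgl⟩ := core_series u hpos hlow N hNpos hN q
  refine ⟨f, g, hf, hg, ?_⟩
  rintro ⟨-, C, hC⟩
  obtain ⟨i, hi⟩ := exists_nat_gt C
  obtain ⟨_, ⟨t, ht, rfl⟩, hlt⟩ := (lt_isLUB_iff (hNlub (p i + q i))).1 (hpq i)
  have ht : 0 ≤ t := ht
  have h1 := hC t
  have hp := hNpos (p i)
  have hq := hNpos (q i)
  have hut := hpos t ht
  rw [norm_mul, Complex.norm_real, Real.norm_of_nonneg ht] at h1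
  have h2 : ((1 / 2 : ℝ) ^ i * (t ^ p i / N (p i))) * ((1 / 2 : ℝ) ^ i * (t ^ q i / N (q i)))
      ≤ ‖f t‖ * ‖g t‖ :=
    mul_le_mul (hfl i t ht) (hgl i t ht) (by positivity) (norm_nonneg _)
  have h3 := (mul_le_mul_of_nonneg_right h2 hut.le).trans h1
  have h4 : ((1 / 2 : ℝ) ^ i * (t ^ p i / N (p i))) * ((1 / 2 : ℝ) ^ i * (t ^ q i / N (q i))) * u t
      = (t ^ (p i + q i) * u t) / (4 ^ i * (N (p i) * N (q i))) := by
    have : (4 : ℝ) ^ i = 2 ^ i * 2 ^ i := by rw [← mul_pow]; norm_num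
    rw [this, pow_add, one_div, inv_pow]
    field_simp
  rw [h4, div_le_iff₀ (by positivity)] at h3
  have h5 : (0 : ℝ) < 4 ^ i * (N (p i) * N (q i)) := by positivity
  have hlt' : 4 ^ i * ((i : ℝ) + 1) * (N (p i) * N (q i)) < t ^ (p i + q i) * u t := hlt
  nlinarith

lemma omega_bdd (M : ℕ → ℝ) (hM : LCset M) (t : ℝ) (ht : 0 < t) :
    BddAbove (range fun j : ℕ => Real.log (t ^ j / M j)) := by
  obtain ⟨⟨hp, -, hT⟩, -, -⟩ := hM
  have hev : ∀ᶠ j : ℕ in atTop, Real.log (t ^ j / M j) ≤ 0 := by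
    filter_upwards [hT.eventually_ge_atTop t, eventually_ge_atTop 1] with j hj hj1
    have hMj := hp j
    refine Real.log_nonpos (by positivity) ((div_le_one hMj).2 ?_)
    have h := pow_le_pow_left₀ ht.le hj j
    rwa [← Real.rpow_natCast (M j ^ (1 / (j : ℝ))), ← Real.rpow_mul hMj.le,
      one_div_mul_cancel (by positivity), Real.rpow_one] at h
  exact (show IsBoundedUnder (· ≤ ·) atTop _ from ⟨0, eventually_map.2 hev⟩).bddAbove_range

theorem stmt16 :
    (∀ u : ℝ → ℝ, IsWeight u → NormalizedWeight u →
      ∃ f g : ℂ → ℂ, f ∈ Hinf u ∧ g ∈ Hinf u ∧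
        (fun z : ℂ => f z * g z) ∉ Hinf u) ∧
    (∀ M : ℕ → ℝ, LCset M →
      ∃ f g : ℂ → ℂ, f ∈ Hinf (vM M) ∧ g ∈ Hinf (vM M) ∧
        (fun z : ℂ => f z * g z) ∉ Hinf (vM M)) := by
  refine ⟨?_, ?_⟩
  · rintro u ⟨hpos, -, hanti, hrap⟩ -
    refine core_main u hpos ?_ ?_
    · intro R hR
      exact ⟨u R, hpos R hR.le, fun t ht htR => hanti ht hR.le htR⟩
    · intro j
      obtain ⟨T, hT⟩ := eventually_atTop.1 ((hrap j).eventually_le_const zero_lt_one)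
      refine ⟨max 1 (|T| ^ j * u 0), fun t ht => ?_⟩
      rcases le_total T t with h | h
      · exact (hT t h).trans (le_max_left _ _)
      · refine le_trans ?_ (le_max_right _ _)
        have h0 := hpos t ht
        exact mul_le_mul (pow_le_pow_left₀ ht (h.trans (le_abs_self T)) j)
          (hanti self_mem_Ici ht ht) h0.le (by positivity)
  · intro M hM
    have hp := hM.1.1
    have hM0 := hM.1.2.1
    have hle : ∀ t, 0 < t → ∀ j, Real.log (t ^ j / M j) ≤ omegaM M t := by
      intro t ht j
      rw [omegaM, if_neg ht.ne']
      exact le_ciSup (omega_bdd M hM t ht) j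
    refine core_main (vM M) (fun t _ => Real.exp_pos _) ?_ ?_
    · intro R hR
      refine ⟨Real.exp (-(omegaM M R)), Real.exp_pos _, fun t ht htR => ?_⟩
      refine Real.exp_le_exp.2 (neg_le_neg ?_)
      rcases ht.eq_or_lt with rfl | ht
      · have := hle R hR 0
        simpa [omegaM, hM0] using this
      · rw [omegaM, if_neg ht.ne']
        refine ciSup_le fun j => le_trans ?_ (hle R hR j)
        have := hp j
        exact Real.log_le_log (by positivity) (by gcongr)
    · intro j
      refine ⟨max 1 (M j), fun t ht => ?_⟩
      rcases ht.eq_or_lt with rfl | ht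
      · refine le_trans ?_ (le_max_left _ _)
        simpa [vM, omegaM] using pow_le_one₀ (n := j) le_rfl zero_le_one
      · refine le_trans ?_ (le_max_right _ _)
        have hj := hp j
        have h := hle t ht j
        rw [Real.log_le_iff_le_exp (by positivity), div_le_iff₀ hj] at h
        rw [vM, Real.exp_neg, ← div_eq_mul_inv, div_le_iff₀ (Real.exp_pos _)]
        linarith
end

section
/- Let M be a log-convex weight sequence with moderate growth (mg). Then there exists H ≥ 1 such that for all c₁, c₂ > 0 and all f ∈ H^∞_{v_{M,c₁}}(ℂ) and g ∈ H^∞_{v_{M,c₂}}(ℂ), the pointwise product f·g belongs to H^∞_{v_{M,H·max(c₁,c₂)}}(ℂ). Consequently, both ⋃_{c>0} H^∞_{v_{M,c}}(ℂ) and ⋂_{c>0} H^∞_{v_{M,c}}(ℂ) are closed under pointwise multiplication. -/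
open Filter Set

theorem bdd_omega {M : ℕ → ℝ} (hM : WeightSeq M) {t : ℝ} (ht : 0 < t) :
    BddAbove (range fun j : ℕ => Real.log (t ^ j / M j)) := by
  obtain ⟨hpos, -, hlim⟩ := hM
  have hev : ∀ᶠ j : ℕ in atTop, Real.log (t ^ j / M j) ≤ 0 := by
    filter_upwards [hlim.eventually_ge_atTop t, eventually_ge_atTop 1] with j hj hj1
    have h1 : t ^ j ≤ M j := by
      calc t ^ j ≤ ((M j) ^ (1 / (j : ℝ))) ^ j := pow_le_pow_left₀ ht.le hj j
        _ = M j := by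
          rw [one_div]
          exact Real.rpow_inv_natCast_pow (hpos j).le (by omega)
    apply Real.log_nonpos (div_nonneg (pow_nonneg ht.le _) (hpos j).le)
    exact (div_le_one (hpos j)).2 h1
  have hb : IsBoundedUnder (· ≤ ·) atTop (fun j : ℕ => Real.log (t ^ j / M j)) :=
    ⟨0, by simpa using hev⟩
  exact hb.bddAbove_range

theorem omega_add_le {M : ℕ → ℝ} (hM : WeightSeq M) {C : ℝ} (hC : 1 ≤ C)
    (hmg : ∀ j k : ℕ, M (j + k) ≤ C ^ (j + k) * M j * M k) {s t r : ℝ}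
    (hs : 0 < s) (ht : 0 < t) (hsr : s ≤ r) (htr : t ≤ r) :
    omegaM M s + omegaM M t ≤ omegaM M (C * r) := by
  have hr : 0 < r := hs.trans_le hsr
  have hCr : 0 < C * r := by positivity
  have hpos := hM.1
  unfold omegaM
  rw [if_neg hs.ne', if_neg ht.ne', if_neg hCr.ne']
  apply ciSup_add_ciSup_le
  intro j k
  refine le_trans ?_ (le_ciSup (bdd_omega hM hCr) (j + k))
  have hj := hpos j
  have hk := hpos k
  have hjk := hpos (j + k)
  rw [← Real.log_mul (by positivity) (by positivity)]
  apply Real.log_le_log (by positivity)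
  rw [div_mul_div_comm, div_le_div_iff₀ (by positivity) hjk]
  calc s ^ j * t ^ k * M (j + k) ≤ r ^ j * r ^ k * (C ^ (j + k) * M j * M k) := by
        gcongr
        exact hmg j k
    _ = (C * r) ^ (j + k) * (M j * M k) := by ring

theorem mul_mem_aux {M : ℕ → ℝ} (hM : WeightSeq M) {C : ℝ} (hC : 1 ≤ C)
    (hmg : ∀ j k : ℕ, M (j + k) ≤ C ^ (j + k) * M j * M k) (c₁ c₂ : ℝ) (h₁ : 0 < c₁) (h₂ : 0 < c₂)
    (f g : ℂ → ℂ) (hf : f ∈ Hinf (vMc M c₁)) (hg : g ∈ Hinf (vMc M c₂)) :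
    (fun z : ℂ => f z * g z) ∈ Hinf (vMc M (C * max c₁ c₂)) := by
  obtain ⟨hfd, A, hA⟩ := hf
  obtain ⟨hgd, B, hB⟩ := hg
  refine ⟨hfd.mul hgd, A * B, fun z => ?_⟩
  have key : omegaM M (c₁ * ‖z‖) + omegaM M (c₂ * ‖z‖) ≤ omegaM M (C * max c₁ c₂ * ‖z‖) := by
    rcases (norm_nonneg z).eq_or_lt with h | h
    · simp [← h, omegaM]
    · rw [mul_assoc]
      exact omega_add_le hM hC hmg (by positivity) (by positivity)
        (by gcongr; exact le_max_left _ _) (by gcongr; exact le_max_right _ _)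
  have hv : vMc M (C * max c₁ c₂) ‖z‖ ≤ vMc M c₁ ‖z‖ * vMc M c₂ ‖z‖ := by
    unfold vMc
    rw [← Real.exp_add]
    apply Real.exp_le_exp.2
    linarith
  have h0 : ∀ c, 0 ≤ vMc M c ‖z‖ := fun c => (Real.exp_pos _).le
  calc ‖f z * g z‖ * vMc M (C * max c₁ c₂) ‖z‖
      ≤ ‖f z * g z‖ * (vMc M c₁ ‖z‖ * vMc M c₂ ‖z‖) := by gcongr
    _ = (‖f z‖ * vMc M c₁ ‖z‖) * (‖g z‖ * vMc M c₂ ‖z‖) := by rw [norm_mul]; ring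
    _ ≤ A * B := mul_le_mul (hA z) (hB z) (mul_nonneg (norm_nonneg _) (h0 _))
        ((mul_nonneg (norm_nonneg _) (h0 _)).trans (hA z))

/-- Proposition: for a log-convex weight sequence `M` with (mg), there is
`H ≥ 1` with `f·g ∈ H^∞_{v_{M,H·max(c₁,c₂)}}` whenever `f ∈ H^∞_{v_{M,c₁}}`,
`g ∈ H^∞_{v_{M,c₂}}`; consequently the union and the intersection of the
spaces `H^∞_{v_{M,c}}` are closed under pointwise multiplication. -/
theorem stmt17 (M : ℕ → ℝ) (hM : WeightSeq M) (hMlc : LogConvexSeq M)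
    (hmg : MGseq M) :
    (∃ H : ℝ, 1 ≤ H ∧ ∀ c₁ c₂ : ℝ, 0 < c₁ → 0 < c₂ →
      ∀ f g : ℂ → ℂ, f ∈ Hinf (vMc M c₁) → g ∈ Hinf (vMc M c₂) →
        (fun z : ℂ => f z * g z) ∈ Hinf (vMc M (H * max c₁ c₂))) ∧
    (∀ f g : ℂ → ℂ,
      f ∈ ⋃ c : {c : ℝ // 0 < c}, Hinf (vMc M c.1) →
      g ∈ ⋃ c : {c : ℝ // 0 < c}, Hinf (vMc M c.1) →
      (fun z : ℂ => f z * g z) ∈ ⋃ c : {c : ℝ // 0 < c}, Hinf (vMc M c.1)) ∧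
    (∀ f g : ℂ → ℂ,
      f ∈ ⋂ c : {c : ℝ // 0 < c}, Hinf (vMc M c.1) →
      g ∈ ⋂ c : {c : ℝ // 0 < c}, Hinf (vMc M c.1) →
      (fun z : ℂ => f z * g z) ∈ ⋂ c : {c : ℝ // 0 < c}, Hinf (vMc M c.1)) := by
  obtain ⟨C, hC, hmg⟩ := hmg
  have key := mul_mem_aux hM hC hmg
  have hC0 : 0 < C := by linarith
  refine ⟨⟨C, hC, key⟩, ?_, ?_⟩
  · intro f g hf hg
    obtain ⟨⟨c₁, h₁⟩, hf⟩ := mem_iUnion.1 hf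
    obtain ⟨⟨c₂, h₂⟩, hg⟩ := mem_iUnion.1 hg
    exact mem_iUnion.2 ⟨⟨C * max c₁ c₂, mul_pos hC0 (lt_max_of_lt_left h₁)⟩,
      key c₁ c₂ h₁ h₂ f g hf hg⟩
  · intro f g hf hg
    refine mem_iInter.2 fun ⟨c, hc⟩ => ?_
    have hd : 0 < c / C := by positivity
    have h := key (c / C) (c / C) hd hd f g (mem_iInter.1 hf ⟨_, hd⟩) (mem_iInter.1 hg ⟨_, hd⟩)
    rwa [max_self, mul_div_cancel₀ _ hC0.ne'] at h
end

section
/- Let M, N, L be log-convex weight sequences. (i) If there exist c₁, c₂, d > 0 such that for all f ∈ H^∞_{v_{M,c₁}}(ℂ) and all g ∈ H^∞_{v_{N,c₂}}(ℂ) the pointwise product f·g belongs to H^∞_{v_{L,d}}(ℂ), then L ≼ M⋆N, i.e. sup_{j≥1} (L_j/(M⋆N)_j)^{1/j} < ∞. (ii) If this hypothesis holds with M = N = L, then M has moderate growth (mg). -/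
open Filter Set

lemma aux_bdd_s18 (M : ℕ → ℝ) (hM : WeightSeq M) (t : ℝ) (ht : 0 < t) :
    BddAbove (Set.range fun j : ℕ => Real.log (t ^ j / M j)) := by
  obtain ⟨hpos, h0, hlim⟩ := hM
  have hev : ∀ᶠ j : ℕ in atTop, Real.log (t ^ j / M j) ≤ 0 := by
    filter_upwards [hlim.eventually_ge_atTop t, eventually_ge_atTop 1] with j hj hj1
    apply Real.log_nonpos
    · exact (div_pos (pow_pos ht j) (hpos j)).le
    · rw [div_le_one (hpos j)]
      have h1 : t ^ j ≤ ((M j) ^ (1 / (j : ℝ))) ^ j := pow_le_pow_left₀ ht.le hj j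
      rwa [one_div, Real.rpow_inv_natCast_pow (hpos j).le (by omega)] at h1
  have : IsBoundedUnder (· ≤ ·) atTop (fun j : ℕ => Real.log (t ^ j / M j)) :=
    ⟨0, by simpa [eventually_map] using hev⟩
  exact this.bddAbove_range

lemma aux_term (M : ℕ → ℝ) (hM : WeightSeq M) (t : ℝ) (ht : 0 ≤ t) (j : ℕ) :
    t ^ j / M j ≤ Real.exp (omegaM M t) := by
  have hb := aux_bdd_s18 M hM
  obtain ⟨hpos, h0, hlim⟩ := hM
  rcases ht.eq_or_lt with h | h
  · subst h
    rcases j with _ | j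
    · simp [h0, omegaM]
    · simp [omegaM]
  · have h1 := le_ciSup (hb t h) j
    rw [omegaM, if_neg h.ne']
    rw [← Real.log_le_iff_le_exp (div_pos (pow_pos h j) (hpos j))]
    exact h1

lemma aux_peak (L : ℕ → ℝ) (hL : WeightSeq L) (hLlc : LogConvexSeq L) (j : ℕ) :
    ∃ t : ℝ, 0 < t ∧ Real.exp (omegaM L t) ≤ t ^ j / L j := by
  obtain ⟨hpos, h0, hlim⟩ := hL
  have hmono : Monotone (fun i => L (i + 1) / L i) := by
    apply monotone_nat_of_le_succ
    intro i
    have h := hLlc (i + 1) (by omega)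
    simp only [Nat.add_sub_cancel] at h
    rw [div_le_div_iff₀ (hpos _) (hpos _)]
    nlinarith
  obtain ⟨t, htd⟩ : ∃ t, t = L (j + 1) / L j := ⟨_, rfl⟩
  have ht : 0 < t := htd ▸ div_pos (hpos _) (hpos _)
  have hup : ∀ i, j ≤ i → L j * t ^ i ≤ L i * t ^ j := by
    intro i hi
    induction i, hi using Nat.le_induction with
    | base => exact le_rfl
    | succ i hi ih =>
      have h1 : t ≤ L (i + 1) / L i := htd ▸ hmono hi
      rw [le_div_iff₀ (hpos i)] at h1
      calc L j * t ^ (i + 1) = (L j * t ^ i) * t := by ring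
        _ ≤ (L i * t ^ j) * t := by gcongr
        _ = (t * L i) * t ^ j := by ring
        _ ≤ L (i + 1) * t ^ j := by gcongr
  have hdown : ∀ n i, i + n = j → L j * t ^ i ≤ L i * t ^ j := by
    intro n
    induction n with
    | zero => intro i hi; simp at hi; subst hi; exact le_rfl
    | succ n ih =>
      intro i hi
      have h2 := ih (i + 1) (by omega)
      have h1 : L (i + 1) / L i ≤ t := htd ▸ hmono (show i ≤ j by omega)
      rw [div_le_iff₀ (hpos i)] at h1
      refine le_of_mul_le_mul_right ?_ ht
      calc L j * t ^ i * t = L j * t ^ (i + 1) := by ring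
        _ ≤ L (i + 1) * t ^ j := h2
        _ ≤ (t * L i) * t ^ j := by gcongr
        _ = L i * t ^ j * t := by ring
  refine ⟨t, ht, ?_⟩
  rw [← Real.le_log_iff_exp_le (div_pos (pow_pos ht j) (hpos j)), omegaM, if_neg ht.ne']
  apply ciSup_le
  intro i
  apply Real.log_le_log (div_pos (pow_pos ht i) (hpos i))
  rw [div_le_div_iff₀ (hpos _) (hpos _)]
  have : L j * t ^ i ≤ L i * t ^ j := by
    rcases le_total j i with h | h
    · exact hup i h
    · exact hdown (j - i) i (by omega)
  linarith

lemma aux_fun (M : ℕ → ℝ) (hM : WeightSeq M) (c : ℝ) (hc : 0 < c) :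
    ∃ f : ℂ → ℂ, f ∈ Hinf (vMc M c) ∧
      ∀ t : ℝ, 0 ≤ t → ∀ k : ℕ, (c / 2 * t) ^ k / M k ≤ ‖f t‖ := by
  have hpos := hM.1
  have hterm : ∀ (R : ℝ) (z : ℂ), ‖z‖ ≤ R → ∀ j : ℕ,
      ‖((c / 2 : ℝ) * z) ^ j / (M j : ℂ)‖ ≤ (1 / 2 : ℝ) ^ j * Real.exp (omegaM M (c * R)) := by
    intro R z hz j
    have hR : 0 ≤ R := (norm_nonneg z).trans hz
    have h := aux_term M hM (c * R) (by positivity) j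
    have hMj := hpos j
    rw [norm_div, norm_pow, norm_mul, Complex.norm_real, Complex.norm_real, Real.norm_eq_abs,
      Real.norm_eq_abs, abs_of_pos hMj, abs_of_pos (by positivity)]
    calc (c / 2 * ‖z‖) ^ j / M j ≤ (c / 2 * R) ^ j / M j := by gcongr
      _ = (1 / 2 : ℝ) ^ j * ((c * R) ^ j / M j) := by
        rw [← mul_div_assoc, ← mul_pow]; congr 2; ring
      _ ≤ _ := by gcongr
  have hgs : ∀ E : ℝ, HasSum (fun j : ℕ => (1 / 2 : ℝ) ^ j * E) (2 * E) := fun E =>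
    hasSum_geometric_two.mul_right E
  refine ⟨fun z => ∑' j : ℕ, ((c / 2 : ℝ) * z) ^ j / (M j : ℂ), ⟨?_, 2, ?_⟩, ?_⟩
  · intro z
    have := Complex.differentiableOn_tsum_of_summable_norm (U := Metric.ball (0:ℂ) (‖z‖ + 1))
      (F := fun (j : ℕ) (z : ℂ) => ((c / 2 : ℝ) * z) ^ j / (M j : ℂ))
      (hgs (Real.exp (omegaM M (c * (‖z‖ + 1))))).summable
      (fun j => by fun_prop) Metric.isOpen_ball
      (fun j w hw => hterm _ w (by simpa using (mem_ball_zero_iff.1 hw).le) j)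
    exact this.differentiableAt (Metric.isOpen_ball.mem_nhds (by simp))
  · intro z
    have h := tsum_of_norm_bounded (hgs _) (hterm ‖z‖ z le_rfl)
    rw [vMc, Real.exp_neg, ← div_eq_mul_inv, div_le_iff₀ (Real.exp_pos _)]
    exact h
  · intro t ht k
    have hs : Summable (fun j : ℕ => (c / 2 * t) ^ j / M j) := by
      have : Summable (fun j : ℕ => ‖((c / 2 : ℝ) * (t : ℂ)) ^ j / (M j : ℂ)‖) :=
        Summable.of_nonneg_of_le (fun _ => norm_nonneg _) (hterm _ (t : ℂ) le_rfl) (hgs _).summable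
      refine Summable.of_norm (this.congr fun j => ?_)
      rw [← Complex.norm_real]; push_cast; rfl
    have hnn : ∀ j, 0 ≤ (c / 2 * t) ^ j / M j := fun j => by
      have := hpos j; positivity
    have h1 := hs.le_tsum k (fun j _ => hnn j)
    have h2 : (∑' j : ℕ, ((c / 2 : ℝ) * (t : ℂ)) ^ j / (M j : ℂ))
        = ((∑' j : ℕ, (c / 2 * t) ^ j / M j : ℝ) : ℂ) := by
      push_cast; rfl
    show _ ≤ ‖∑' j : ℕ, ((c / 2 : ℝ) * (t : ℂ)) ^ j / (M j : ℂ)‖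
    rw [h2, Complex.norm_real]
    exact h1.trans (Real.le_norm_self _)

lemma aux_core (M N L : ℕ → ℝ) (hM : WeightSeq M) (hN : WeightSeq N)
    (hL : WeightSeq L) (hLlc : LogConvexSeq L)
    (H : ∃ c₁ : ℝ, 0 < c₁ ∧ ∃ c₂ : ℝ, 0 < c₂ ∧ ∃ d : ℝ, 0 < d ∧
        ∀ f g : ℂ → ℂ, f ∈ Hinf (vMc M c₁) → g ∈ Hinf (vMc N c₂) →
          (fun z : ℂ => f z * g z) ∈ Hinf (vMc L d)) :
    ∃ S : ℝ, 1 ≤ S ∧ ∀ k l : ℕ, L (k + l) ≤ S ^ (k + l) * (M k * N l) := by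
  obtain ⟨c₁, hc₁, c₂, hc₂, d, hd, H⟩ := H
  obtain ⟨f, hf, hf'⟩ := aux_fun M hM c₁ hc₁
  obtain ⟨g, hg, hg'⟩ := aux_fun N hN c₂ hc₂
  obtain ⟨-, C, hC⟩ := H f g hf hg
  obtain ⟨a, ha, ha1, ha2⟩ : ∃ a : ℝ, 0 < a ∧ a ≤ c₁ / 2 ∧ a ≤ c₂ / 2 :=
    ⟨min (c₁ / 2) (c₂ / 2), by positivity, min_le_left _ _, min_le_right _ _⟩
  obtain ⟨B, hB1, hBC⟩ : ∃ B : ℝ, 1 ≤ B ∧ C ≤ B := ⟨max 1 C, le_max_left _ _, le_max_right _ _⟩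
  obtain ⟨r, hr1, hr⟩ : ∃ r : ℝ, 1 ≤ r ∧ d / a ≤ r :=
    ⟨max 1 (d / a), le_max_left _ _, le_max_right _ _⟩
  refine ⟨B * r, one_le_mul_of_one_le_of_one_le hB1 hr1, ?_⟩
  intro k l
  have hLp := hL.1 (k + l)
  have hMp := hM.1 k
  have hNp := hN.1 l
  rcases Nat.eq_zero_or_pos (k + l) with h0 | h0
  · obtain ⟨rfl, rfl⟩ : k = 0 ∧ l = 0 := by omega
    simp [hM.2.1, hN.2.1, hL.2.1]
  obtain ⟨s, hs, hpk⟩ := aux_peak L hL hLlc (k + l)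
  obtain ⟨t, ht, rfl⟩ : ∃ t : ℝ, 0 < t ∧ s = d * t := ⟨s / d, by positivity, by field_simp⟩
  have h1 := hC (t : ℂ)
  rw [vMc, Real.exp_neg, ← div_eq_mul_inv, div_le_iff₀ (Real.exp_pos _), Complex.norm_real,
    Real.norm_of_nonneg ht.le, norm_mul] at h1
  have h2 : (a * t) ^ k / M k ≤ ‖f t‖ :=
    le_trans (by gcongr) (hf' t ht.le k)
  have h3 : (a * t) ^ l / N l ≤ ‖g t‖ :=
    le_trans (by gcongr) (hg' t ht.le l)
  have h4 : (a * t) ^ k / M k * ((a * t) ^ l / N l) ≤ B * ((d * t) ^ (k + l) / L (k + l)) :=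
    calc _ ≤ ‖f t‖ * ‖g t‖ := by gcongr
      _ ≤ C * Real.exp (omegaM L (d * t)) := h1
      _ ≤ _ := by gcongr
  rw [div_mul_div_comm, ← pow_add, ← mul_div_assoc, div_le_div_iff₀ (by positivity) hLp] at h4
  have hda : d ≤ r * a := by rwa [div_le_iff₀ ha] at hr
  have h5 : (a * t) ^ (k + l) * L (k + l) ≤ (a * t) ^ (k + l) * ((B * r) ^ (k + l) * (M k * N l)) :=
    calc _ ≤ B * (d * t) ^ (k + l) * (M k * N l) := h4
      _ ≤ B ^ (k + l) * (r * a * t) ^ (k + l) * (M k * N l) := by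
        gcongr
        exact le_self_pow₀ hB1 (by omega)
      _ = _ := by rw [mul_assoc r, mul_pow r, mul_pow B]; ring
  exact le_of_mul_le_mul_left h5 (by positivity)

/-- Proposition: for log-convex weight sequences `M`, `N`, `L`: (i) if the
pointwise product maps `H^∞_{v_{M,c₁}} × H^∞_{v_{N,c₂}}` into `H^∞_{v_{L,d}}`
for some `c₁, c₂, d > 0`, then `L ≼ M⋆N`; (ii) if this holds with
`M = N = L`, then `M` has (mg). -/
theorem stmt18 (M N L : ℕ → ℝ) (hM : WeightSeq M) (hMlc : LogConvexSeq M)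
    (hN : WeightSeq N) (hNlc : LogConvexSeq N)
    (hL : WeightSeq L) (hLlc : LogConvexSeq L) :
    ((∃ c₁ : ℝ, 0 < c₁ ∧ ∃ c₂ : ℝ, 0 < c₂ ∧ ∃ d : ℝ, 0 < d ∧
        ∀ f g : ℂ → ℂ, f ∈ Hinf (vMc M c₁) → g ∈ Hinf (vMc N c₂) →
          (fun z : ℂ => f z * g z) ∈ Hinf (vMc L d)) →
      ∃ S : ℝ, ∀ j : ℕ, 1 ≤ j → (L j / convSeq M N j) ^ (1 / (j : ℝ)) ≤ S) ∧
    ((∃ c₁ : ℝ, 0 < c₁ ∧ ∃ c₂ : ℝ, 0 < c₂ ∧ ∃ d : ℝ, 0 < d ∧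
        ∀ f g : ℂ → ℂ, f ∈ Hinf (vMc M c₁) → g ∈ Hinf (vMc M c₂) →
          (fun z : ℂ => f z * g z) ∈ Hinf (vMc M d)) →
      MGseq M) := by
  refine ⟨fun H => ?_, fun H => ?_⟩
  · obtain ⟨S, hS1, hS⟩ := aux_core M N L hM hN hL hLlc H
    refine ⟨S, fun j hj => ?_⟩
    obtain ⟨k, hk, hke⟩ := Finset.exists_mem_eq_inf' (s := Finset.range (j + 1))
      Finset.nonempty_range_add_one (fun k => M k * N (j - k))
    have hkj : k + (j - k) = j := by have := Finset.mem_range.1 hk; omega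
    have h := hS k (j - k)
    have hMp := hM.1 k
    have hNp := hN.1 (j - k)
    have hLp := hL.1 j
    rw [hkj] at h
    have hce : convSeq M N j = M k * N (j - k) := hke
    rw [hce]
    have h1 : L j / (M k * N (j - k)) ≤ S ^ j := by
      rwa [div_le_iff₀ (by positivity)]
    calc (L j / (M k * N (j - k))) ^ (1 / (j : ℝ)) ≤ (S ^ j) ^ (1 / (j : ℝ)) := by
          apply Real.rpow_le_rpow (by positivity) h1 (by positivity)
      _ = S := by
          rw [one_div]
          exact Real.pow_rpow_inv_natCast (by linarith) (by omega)
  · obtain ⟨S, hS1, hS⟩ := aux_core M M M hM hM hM hMlc H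
    exact ⟨S, hS1, fun j k => by rw [mul_assoc]; exact hS j k⟩
end
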